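/- arXiv:0812.0372 — 2 statements merged into one kernel-verified Lean document; each statement's English description precedes it below -/
import Mathlib

section
/- Let q ≥ 4 be an integer and d = q³ + 2q² − q − 8. Let A and B be nonempty disjoint finite sets and let H be a connected simple graph on the vertex set A ∪ B; let 𝒢 denote the induced subgraph H[B], and for v ∈ B let d_A(v) denote the number of neighbors of v in H that lie in A. Assume: (1) no two vertices of A are adjacent in H; (2) every vertex of A has degree at least d in H; (3) for every v ∈ B, deg_𝒢(v) + ⌈d_A(v)/q⌉ ≤ d. Then 𝒢 admits a proper coloring with d colors such that every vertex of A has at least q distinct colors among its neighbors in B. -/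
/-!
Let `t v = d - deg v` be the slack of `v ∈ B`, degrees being taken in `H[B]`, so that `v` has at
most `q * t v` neighbors in `A`. Suppose each `a ∈ A` selects a set `Q a` of `q` neighbors. If
`v ∈ B` is selected at most `(t v - 1) / (q - 1)` times, turning all the sets `Q a` into cliques
leaves its degree below `d`, and a greedy coloring succeeds. The rounding in this quotient makes
such a selection impossible in general for the tight vertices, those with
`1 ≤ t v ≤ (q - 1) ^ 2`. So the tight vertices are marked with probability `1 / 2`, and the
vertices of the set `W` of marked ones may be selected `q + 1` more times: if `W` is colored first,
a marked vertex only sees its marked neighbors, which pays for the excess.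

The local lemma provides marks for which every `v ∈ W` has few neighbors in `W` and the fractional
selection with weights `weight / (6 * q ^ 2)` has total at least `q` on the neighborhood of each
`a`; by Hall's theorem it can be rounded to the sets `Q a`.

It remains to color the free vertices, those without neighbors in `A`, which may have slack `0`.
A component `C` of the free part with an uncolored neighbor outside is colored greedily along
decreasing distance to that neighbor. If instead all outside neighbors of `C` lie in `W`, it is
enough that some color class of `W` sends few edges to `C`: color `C` together with the other
classes, then swap two colors on `C` so as to avoid the class left out. Such a class exists if `W`
was colored with a small core of the boundary of `C` turned into a clique, and there is a core as
soon as the boundary has at most `d / 2` vertices, of which at most one sends more than `d / 2`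
edges to `C`. The local lemma excludes wide boundaries contained in `W`, and two vertices sending
more than `d / 2` edges to `C` are given opposite marks.
-/

section LocalLemma

open Finset

theorem dens_inter_of_dependsOn {ι : Type*} {κ : ι → Type*} [Fintype ι] [DecidableEq ι]
    [∀ i, Fintype (κ i)] [∀ i, DecidableEq (κ i)] {X Y : Finset (∀ i, κ i)} {D : Set ι}
    (hX : DependsOn (· ∈ X) D) (hY : DependsOn (· ∈ Y) Dᶜ) :
    (X ∩ Y).dens = X.dens * Y.dens := by
  classical
  let swap (p : (∀ i, κ i) × ∀ i, κ i) : (∀ i, κ i) × ∀ i, κ i :=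
    (D.piecewise p.1 p.2, D.piecewise p.2 p.1)
  have swap_swap (p) : swap (swap p) = p := by
    ext i <;> by_cases hi : i ∈ D <;> simp [swap, hi]
  have mem_swap (p) : swap p ∈ (X ∩ Y) ×ˢ univ ↔ p ∈ X ×ˢ Y := by
    have h₁ : D.piecewise p.1 p.2 ∈ X ↔ p.1 ∈ X :=
      (hX fun i hi ↦ D.piecewise_eq_of_mem _ _ hi).to_iff
    have h₂ : D.piecewise p.1 p.2 ∈ Y ↔ p.2 ∈ Y :=
      (hY fun i hi ↦ D.piecewise_eq_of_notMem _ _ hi).to_iff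
    simp [swap, h₁, h₂]
  have hcard : #((X ∩ Y) ×ˢ (univ : Finset (∀ i, κ i))) = #(X ×ˢ Y) :=
    card_nbij' swap swap (fun p hp ↦ (mem_swap _).1 (by rwa [swap_swap]))
      (fun p hp ↦ (mem_swap p).2 hp) (fun p _ ↦ swap_swap p) fun p _ ↦ swap_swap p
  rw [card_product, card_product, card_univ] at hcard
  obtain h | h := isEmpty_or_nonempty (∀ i, κ i)
  · simp [Finset.dens, eq_empty_of_isEmpty]
  · simp only [dens_eq_card_div_card]
    field_simp
    exact_mod_cast hcard

variable {Ω I : Type*} [Fintype Ω] [DecidableEq Ω]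

/-- The points of the sample space `Ω` lying in none of the events `E j` with `j ∈ T`. -/
def avoiding (E : I → Finset Ω) (T : Finset I) : Finset Ω := {ω | ∀ j ∈ T, ω ∉ E j}

variable {E : I → Finset Ω}

theorem mem_avoiding {T : Finset I} {ω : Ω} : ω ∈ avoiding E T ↔ ∀ j ∈ T, ω ∉ E j := by
  simp [avoiding]

theorem avoiding_anti {T₁ T₂ : Finset I} (h : T₁ ⊆ T₂) : avoiding E T₂ ⊆ avoiding E T₁ :=
  fun _ hω ↦ mem_avoiding.2 fun j hj ↦ mem_avoiding.1 hω j (h hj)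

theorem dens_avoiding_le_add_sum [DecidableEq I] (E : I → Finset Ω) (T₁ T₂ : Finset I) :
    (avoiding E T₂).dens ≤
      (avoiding E (T₁ ∪ T₂)).dens + ∑ j ∈ T₁, (E j ∩ avoiding E T₂).dens := by
  induction T₁ using Finset.induction_on with
  | empty => simp
  | insert i T₁ hi ih =>
    have hsub : avoiding E (T₁ ∪ T₂) ⊆
        avoiding E (insert i T₁ ∪ T₂) ∪ E i ∩ avoiding E T₂ := by
      intro ω hω
      have hω₂ := avoiding_anti subset_union_right hω
      simp only [mem_union, mem_inter, mem_avoiding, mem_insert] at hω hω₂ ⊢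
      grind
    calc (avoiding E T₂).dens
      _ ≤ (avoiding E (insert i T₁ ∪ T₂)).dens + (E i ∩ avoiding E T₂).dens +
          ∑ j ∈ T₁, (E j ∩ avoiding E T₂).dens := by
        grw [ih, hsub, dens_union_le]
      _ = _ := by rw [sum_insert hi, add_assoc]

theorem dens_inter_avoiding_le {p : I → ℚ≥0} {Γ : I → Finset I}
    (hE : ∀ i T, Disjoint T (Γ i) →
      (E i ∩ avoiding E T).dens ≤ p i * (avoiding E T).dens)
    (hΓ : ∀ i, ∑ j ∈ Γ i, p j ≤ 1 / 4) (T : Finset I) (i : I) :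
    (E i ∩ avoiding E T).dens ≤ 2 * p i * (avoiding E T).dens := by
  classical
  induction T using Finset.strongInduction generalizing i with
  | H T ih =>
    set T₁ := T ∩ Γ i
    set T₂ := T \ Γ i
    have hsum : ∑ j ∈ T₁, (E j ∩ avoiding E T₂).dens ≤ (avoiding E T₂).dens / 2 :=
      calc ∑ j ∈ T₁, (E j ∩ avoiding E T₂).dens
        _ ≤ ∑ j ∈ T₁, 2 * p j * (avoiding E T₂).dens := by
          refine sum_le_sum fun j hj ↦ ih _ ?_ j
          grind
        _ = 2 * (∑ j ∈ T₁, p j) * (avoiding E T₂).dens := by rw [mul_sum, sum_mul]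
        _ ≤ 2 * (1 / 4) * (avoiding E T₂).dens := by
          grw [sum_le_sum_of_subset (inter_subset_right : T₁ ⊆ Γ i), hΓ]
        _ = (avoiding E T₂).dens / 2 := by ring
    have hhalf : (avoiding E T₂).dens ≤ 2 * (avoiding E T).dens := by
      have h := dens_avoiding_le_add_sum E T₁ T₂
      rw [union_comm, sdiff_union_inter] at h
      grw [hsum] at h
      have : ((avoiding E T₂).dens : ℚ) ≤ (avoiding E T).dens + (avoiding E T₂).dens / 2 := by
        exact_mod_cast h
      exact_mod_cast (by linarith : ((avoiding E T₂).dens : ℚ) ≤ 2 * (avoiding E T).dens)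
    calc (E i ∩ avoiding E T).dens
      _ ≤ (E i ∩ avoiding E T₂).dens := by
        gcongr
        exact avoiding_anti sdiff_subset
      _ ≤ p i * (avoiding E T₂).dens := hE i _ disjoint_sdiff_self_left
      _ ≤ p i * (2 * (avoiding E T).dens) := by gcongr
      _ = 2 * p i * (avoiding E T).dens := by ring

theorem exists_forall_notMem_of_dens_inter_avoiding_le [Nonempty Ω] [Finite I] {p : I → ℚ≥0}
    {Γ : I → Finset I}
    (hE : ∀ i T, Disjoint T (Γ i) →
      (E i ∩ avoiding E T).dens ≤ p i * (avoiding E T).dens)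
    (hp : ∀ i, p i ≤ 1 / 4) (hΓ : ∀ i, ∑ j ∈ Γ i, p j ≤ 1 / 4) :
    ∃ ω, ∀ i, ω ∉ E i := by
  classical
  cases nonempty_fintype I
  suffices h : ∀ T : Finset I, (avoiding E T).Nonempty by
    obtain ⟨ω, hω⟩ := h univ
    exact ⟨ω, fun i ↦ mem_avoiding.1 hω i (mem_univ i)⟩
  intro T
  induction T using Finset.induction_on with
  | empty => exact ⟨Classical.arbitrary Ω, by simp [mem_avoiding]⟩
  | insert i T _ ih =>
    by_contra h0
    have h := dens_avoiding_le_add_sum E {i} T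
    rw [← insert_eq, not_nonempty_iff_eq_empty.1 h0, dens_empty, sum_singleton, zero_add] at h
    grw [dens_inter_avoiding_le hE hΓ, hp i] at h
    have : ((avoiding E T).dens : ℚ) ≤ 2 * (1 / 4) * (avoiding E T).dens := by exact_mod_cast h
    have : (0 : ℚ) < (avoiding E T).dens := by exact_mod_cast dens_pos.2 ih
    linarith

theorem exists_forall_notMem_of_dependsOn {ι : Type*} {κ : ι → Type*} [Fintype ι]
    [DecidableEq ι] [∀ i, Fintype (κ i)] [∀ i, Nonempty (κ i)] [Fintype I]
    {E : I → Finset (∀ i, κ i)} {D : I → Finset ι} {p : I → ℚ≥0}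
    (hE : ∀ i, DependsOn (· ∈ E i) (D i : Set ι)) (hdens : ∀ i, (E i).dens ≤ p i)
    (hp : ∀ i, p i ≤ 1 / 4) (hsum : ∀ i, ∑ j with ¬Disjoint (D i) (D j), p j ≤ 1 / 4) :
    ∃ ω, ∀ i, ω ∉ E i := by
  classical
  refine exists_forall_notMem_of_dens_inter_avoiding_le (fun i T hT ↦ ?_) hp hsum
  rw [dens_inter_of_dependsOn (hE i)]
  · gcongr
    exact hdens i
  · intro ω ω' h
    simp only [mem_avoiding]
    refine propext <| forall₂_congr fun j hj ↦ not_congr (hE j fun x hx ↦ h x ?_).to_iff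
    have hij : Disjoint (D i) (D j) := by
      by_contra hij
      exact disjoint_left.1 hT hj (by simp [hij])
    exact fun hxi ↦ disjoint_left.1 hij hxi hx

end LocalLemma

section Marking

open Finset
open scoped BigOperators

variable {ι V : Type*}

/-- The marking of `V` read off from the coins `ω : ι → Bool` when `v` is assigned the signed coin
`c v`: its mark is the outcome of the coin `(c v).1`, negated if `(c v).2`. Signed coins of distinct
vertices differ, so two vertices either have independent marks or opposite ones. -/
def marking (c : V ↪ ι × Bool) (ω : ι → Bool) (v : V) : Bool := ω (c v).1 ^^ (c v).2

theorem exists_marking_eq_not {x y : ι → V} (h : Function.Injective (Sum.elim x y)) :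
    ∃ c : V ↪ V × Bool, ∀ ω i, marking c ω (y i) = !marking c ω (x i) := by
  classical
  let coin : V → V × Bool := Function.extend y (fun i ↦ (x i, true)) fun v ↦ (v, false)
  have coin_y (i) : coin (y i) = (x i, true) := (h.comp Sum.inr_injective).extend_apply _ _ i
  have coin_of_notMem {v} (hv : ¬∃ i, y i = v) : coin v = (v, false) :=
    Function.extend_apply' _ _ _ hv
  have hxy (i j) : y j ≠ x i := fun hij ↦ Sum.inr_ne_inl (h (a₁ := .inr j) (a₂ := .inl i) hij)
  refine ⟨⟨coin, fun v w hvw ↦ ?_⟩, fun ω i ↦ ?_⟩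
  · by_cases hv : ∃ i, y i = v <;> by_cases hw : ∃ i, y i = w
    · obtain ⟨i, rfl⟩ := hv
      obtain ⟨j, rfl⟩ := hw
      rw [coin_y, coin_y, Prod.mk.injEq] at hvw
      rw [(h.comp Sum.inl_injective) hvw.1]
    · obtain ⟨i, rfl⟩ := hv
      simp [coin_y, coin_of_notMem hw] at hvw
    · obtain ⟨j, rfl⟩ := hw
      simp [coin_y, coin_of_notMem hv] at hvw
    · simpa [coin_of_notMem hv, coin_of_notMem hw] using hvw
  · have coin_x : coin (x i) = (x i, false) := coin_of_notMem fun ⟨j, hj⟩ ↦ hxy i j hj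
    change (ω (coin (y i)).1 ^^ (coin (y i)).2) = !(ω (coin (x i)).1 ^^ (coin (x i)).2)
    simp [coin_y, coin_x]

theorem exists_marking_eq_false_of_pairwise_disjoint {s : ι → Finset V}
    (hs : Pairwise (Function.onFun Disjoint s)) :
    ∃ c : V ↪ V × Bool, ∀ ω i, 1 < #(s i) → ∃ v ∈ s i, marking c ω v = false := by
  choose x hx y hy hxy using fun i : {i // 1 < #(s i)} ↦ one_lt_card.1 i.2
  have eq_of_mem {i j : {i // 1 < #(s i)}} {v : V} (hi : v ∈ s i) (hj : v ∈ s j) : i = j :=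
    Subtype.ext (by_contra fun hij ↦ disjoint_left.1 (hs hij) hi hj)
  have hinj : Function.Injective (Sum.elim x y) := by
    rintro (i | i) (j | j) hij <;> simp only [Sum.elim_inl, Sum.elim_inr] at hij
    · rw [eq_of_mem (hx i) (hij ▸ hx j)]
    · obtain rfl := eq_of_mem (hx i) (hij ▸ hy j)
      exact absurd hij (hxy i)
    · obtain rfl := eq_of_mem (hy i) (hij ▸ hx j)
      exact absurd hij.symm (hxy i)
    · rw [eq_of_mem (hy i) (hij ▸ hy j)]
  obtain ⟨c, hc⟩ := exists_marking_eq_not hinj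
  refine ⟨c, fun ω i hi ↦ ?_⟩
  cases hω : marking c ω (x ⟨i, hi⟩) with
  | false => exact ⟨_, hx ⟨i, hi⟩, hω⟩
  | true => exact ⟨_, hy ⟨i, hi⟩, by rw [hc, hω, Bool.not_true]⟩

theorem card_filter_coin_mem_le [DecidableEq ι] [Fintype V] (c : V ↪ ι × Bool) (D : Finset ι) :
    #{u | (c u).1 ∈ D} ≤ 2 * #D := by
  have h : Set.MapsTo c ({u | (c u).1 ∈ D} : Finset V) (D ×ˢ (univ : Finset Bool) : Finset _) := by
    intro u hu
    simpa using hu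
  have := card_le_card_of_injOn c h c.injective.injOn
  rwa [card_product, card_univ, Fintype.card_bool, mul_comm] at this

variable [Fintype ι] [DecidableEq ι]

theorem expect_prod_eq_prod_expect {κ R : Type*} [Fintype κ] [Semifield R] [CharZero R]
    (F : ι → κ → R) : 𝔼 ω : ι → κ, ∏ i, F i (ω i) = ∏ i, 𝔼 k, F i k := by
  simp only [Fintype.expect_eq_sum_div_card, prod_univ_sum, Fintype.piFinset_univ,
    prod_div_distrib, prod_const, card_univ, Fintype.card_pi, Nat.cast_pow]

theorem expect_prod_xor_le {S : Finset V} {σ : V → Bool} (hσ : Set.InjOn σ S) {φ : V → Bool → ℚ≥0}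
    (hφ : ∀ v ∈ S, ∀ w ∈ S, Monovary (φ v) (φ w)) :
    𝔼 b, ∏ v ∈ S, φ v (b ^^ σ v) ≤ ∏ v ∈ S, 𝔼 b, φ v b := by
  have expect_xor (f : Bool → ℚ≥0) (s : Bool) : 𝔼 b, f (b ^^ s) = 𝔼 b, f b :=
    Fintype.expect_bijective (· ^^ s) (by cases s <;> decide) _ _ fun _ ↦ rfl
  have hcard : #S ≤ 2 := by simpa using card_le_card_of_injOn σ (fun v _ ↦ mem_univ _) hσ
  interval_cases h : #S
  · simp [card_eq_zero.1 h]
  · obtain ⟨v, rfl⟩ := card_eq_one.1 h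
    simp only [prod_singleton, expect_xor, le_refl]
  · classical
    obtain ⟨v, w, hvw, rfl⟩ := card_eq_two.1 h
    have hne : σ w = !σ v := by
      have : σ w ≠ σ v := hσ.ne (by simp) (by simp) hvw.symm
      simpa [Bool.eq_not] using this
    have hanti : Antivary (fun b ↦ φ v (b ^^ σ v)) fun b ↦ φ w (b ^^ σ w) := by
      intro b b' hlt
      obtain rfl : b' = !b := Bool.eq_not.2 fun h ↦ hlt.ne (by rw [h])
      simpa using hφ v (by simp) w (by simp) (by simpa [hne] using hlt)
    have hchebyshev := hanti.card_mul_sum_le_sum_mul_sum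
    simp only [prod_pair hvw]
    rw [← expect_xor (φ v) (σ v), ← expect_xor (φ w) (σ w)]
    simp only [Fintype.expect_eq_sum_div_card] at hchebyshev ⊢
    field_simp
    rwa [mul_comm]

theorem expect_prod_marking_le (c : V ↪ ι × Bool) (S : Finset V) {φ : V → Bool → ℚ≥0}
    (hφ : ∀ v ∈ S, ∀ w ∈ S, Monovary (φ v) (φ w)) :
    𝔼 ω, ∏ v ∈ S, φ v (marking c ω v) ≤ ∏ v ∈ S, 𝔼 b, φ v b := by
  calc 𝔼 ω, ∏ v ∈ S, φ v (marking c ω v)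
    _ = 𝔼 ω : ι → Bool, ∏ x, ∏ v ∈ S with (c v).1 = x, φ v (ω x ^^ (c v).2) := by
      refine expect_congr rfl fun ω _ ↦ ?_
      rw [← prod_fiberwise S fun v ↦ (c v).1]
      refine prod_congr rfl fun x _ ↦ prod_congr rfl fun v hv ↦ ?_
      rw [marking, (mem_filter.1 hv).2]
    _ = ∏ x, 𝔼 b, ∏ v ∈ S with (c v).1 = x, φ v (b ^^ (c v).2) :=
      expect_prod_eq_prod_expect fun x b ↦ ∏ v ∈ S with (c v).1 = x, φ v (b ^^ (c v).2)
    _ ≤ ∏ x, ∏ v ∈ S with (c v).1 = x, 𝔼 b, φ v b := by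
      refine prod_le_prod' fun x _ ↦ expect_prod_xor_le ?_ fun v hv w hw ↦
        hφ v (filter_subset _ _ hv) w (filter_subset _ _ hw)
      intro v hv w hw h
      simp only [mem_coe, mem_filter] at hv hw
      exact c.injective (Prod.ext (hv.2.trans hw.2.symm) h)
    _ = ∏ v ∈ S, 𝔼 b, φ v b := prod_fiberwise _ _ _

theorem mul_dens_le_expect {Ω : Type*} [Fintype Ω] (E : Finset Ω) {X : Ω → ℚ≥0} {a : ℚ≥0}
    (hX : ∀ ω ∈ E, a ≤ X ω) : a * E.dens ≤ 𝔼 ω, X ω := by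
  rw [Fintype.expect_eq_sum_div_card, dens_eq_card_div_card, ← mul_div_assoc]
  gcongr
  calc a * #E
    _ = ∑ _ω ∈ E, a := by rw [sum_const, nsmul_eq_mul, mul_comm]
    _ ≤ ∑ ω ∈ E, X ω := sum_le_sum hX
    _ ≤ ∑ ω, X ω := sum_le_univ_sum_of_nonneg fun _ ↦ zero_le

theorem dens_le_of_le_prod_marking (c : V ↪ ι × Bool) (S : Finset V) {φ : V → Bool → ℚ≥0}
    (hφ : ∀ v ∈ S, ∀ w ∈ S, Monovary (φ v) (φ w)) {E : Finset (ι → Bool)} {a p : ℚ≥0} (ha : a ≠ 0)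
    (hE : ∀ ω ∈ E, a ≤ ∏ v ∈ S, φ v (marking c ω v)) (hp : ∏ v ∈ S, 𝔼 b, φ v b ≤ a * p) :
    E.dens ≤ p :=
  le_of_mul_le_mul_left ((mul_dens_le_expect E hE).trans ((expect_prod_marking_le c S hφ).trans hp))
    (pos_iff_ne_zero.2 ha)

theorem dependsOn_marking_mem {c : V ↪ ι × Bool} {P : (V → Bool) → Prop} {S : Finset V}
    [DecidablePred P] (hP : DependsOn P (S : Set V)) :
    DependsOn (· ∈ ({ω | P (marking c ω)} : Finset (ι → Bool)))
      (S.image fun v ↦ (c v).1 : Finset ι) := by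
  intro ω ω' h
  simp only [mem_filter_univ]
  refine hP fun v hv ↦ ?_
  simp only [marking, h (c v).1 (mem_image_of_mem _ hv)]

theorem sum_filter_not_disjoint_le {I : Type*} [Fintype I] [DecidableEq V] (S : I → Finset V)
    (U : Finset V) (p : I → ℚ≥0) :
    ∑ j with ¬Disjoint U (S j), p j ≤ ∑ u ∈ U, ∑ j with u ∈ S j, p j := by
  simp_rw [sum_filter]
  rw [sum_comm]
  refine sum_le_sum fun j _ ↦ ?_
  split_ifs with hj
  · exact zero_le
  · obtain ⟨u, hu, huj⟩ := not_disjoint_iff.1 hj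
    exact (if_pos huj).ge.trans
      (single_le_sum_of_canonicallyOrdered (f := fun u ↦ if u ∈ S j then p j else 0) hu)

theorem exists_marking_forall_not {I : Type*} [Fintype I] [Finite V] [DecidableEq V]
    (c : V ↪ ι × Bool) {P : I → (V → Bool) → Prop} [∀ i, DecidablePred (P i)]
    {S : I → Finset V} {p : I → ℚ≥0} {d : ℕ} {s : ℚ≥0}
    (hP : ∀ i, DependsOn (P i) (S i : Set V))
    (hdens : ∀ i, dens {ω : ι → Bool | P i (marking c ω)} ≤ p i)
    (hp : ∀ i, p i ≤ 1 / 4) (hS : ∀ i, #(S i) ≤ d) (hsum : ∀ v, ∑ i with v ∈ S i, p i ≤ s)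
    (hds : 2 * d * s ≤ 1 / 4) :
    ∃ ω, ∀ i, ¬P i (marking c ω) := by
  cases nonempty_fintype V
  let D (i : I) : Finset ι := (S i).image fun v ↦ (c v).1
  suffices h : ∀ i, ∑ j with ¬Disjoint (D i) (D j), p j ≤ 1 / 4 by
    simpa using exists_forall_notMem_of_dependsOn (fun i ↦ dependsOn_marking_mem (hP i)) hdens hp h
  intro i
  let U : Finset V := {u | (c u).1 ∈ D i}
  have hU (j) (hj : ¬Disjoint (D i) (D j)) : ¬Disjoint U (S j) := by
    obtain ⟨x, hxi, hxj⟩ := not_disjoint_iff.1 hj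
    obtain ⟨u, hu, rfl⟩ := mem_image.1 hxj
    exact not_disjoint_iff.2 ⟨u, by simpa [U] using hxi, hu⟩
  calc ∑ j with ¬Disjoint (D i) (D j), p j
    _ ≤ ∑ j with ¬Disjoint U (S j), p j := by
      refine sum_le_sum_of_subset fun j hj ↦ ?_
      simp only [mem_filter_univ] at hj ⊢
      exact hU j hj
    _ ≤ ∑ u ∈ U, ∑ j with u ∈ S j, p j := sum_filter_not_disjoint_le S U p
    _ ≤ #U * s := by
      rw [← nsmul_eq_mul]
      exact sum_le_card_nsmul U _ s fun u _ ↦ hsum u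
    _ ≤ 2 * d * s := by
      gcongr
      exact_mod_cast (card_filter_coin_mem_le c (D i)).trans
        (Nat.mul_le_mul_left 2 (card_image_le.trans (hS i)))
    _ ≤ 1 / 4 := hds

end Marking

section Estimates

variable {q d : ℕ}

theorem exists_eq_add_of_degree_bound (hq : 4 ≤ q) (hd : q ^ 3 + 2 * q ^ 2 ≤ d + q + 8) :
    ∃ n k, q = n + 4 ∧ d = n ^ 3 + 14 * n ^ 2 + 63 * n + 84 + k := by
  obtain ⟨n, rfl⟩ := Nat.exists_eq_add_of_le' hq
  obtain ⟨k, hk⟩ := Nat.exists_eq_add_of_le hd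
  exact ⟨n, k, rfl, by linarith [hk, show (n + 4) ^ 3 + 2 * (n + 4) ^ 2 =
    n ^ 3 + 14 * n ^ 2 + 63 * n + 84 + (n + 4) + 8 by ring]⟩

theorem cubic_le_mul_two_pow (n : ℕ) : n ^ 3 + 14 * n ^ 2 + 63 * n + 84 ≤ 84 * 2 ^ n := by
  induction n with
  | zero => norm_num
  | succ n ih => rw [pow_succ 2 n]; nlinarith

theorem cubic_add_le (n k : ℕ) :
    ((n ^ 3 + 14 * n ^ 2 + 63 * n + 84 + k : ℕ) : ℚ) ≤ 84 * 2 ^ n * (9 / 8) ^ k := by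
  have hk : 1 + k * (1 / 8) ≤ (9 / 8 : ℚ) ^ k := by
    have := one_add_mul_le_pow (show (-2 : ℚ) ≤ 1 / 8 by norm_num) k
    norm_num at this ⊢
    exact this
  calc ((n ^ 3 + 14 * n ^ 2 + 63 * n + 84 + k : ℕ) : ℚ)
    _ ≤ 84 * 2 ^ n + k := by exact_mod_cast Nat.add_le_add_right (cubic_le_mul_two_pow n) k
    _ ≤ 84 * 2 ^ n * (1 + k * (1 / 8)) := by
      nlinarith [one_le_pow₀ (one_le_two (α := ℚ)) (n := n), k.cast_nonneg (α := ℚ)]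
    _ ≤ 84 * 2 ^ n * (9 / 8) ^ k := by gcongr

theorem many_marked_bound_le (n k : ℕ) :
    (3 ^ ((n + 4) ^ 2 - 2) *
        (2 / 3) ^ (n ^ 3 + 14 * n ^ 2 + 63 * n + 84 + k - (n + 4 - 1) ^ 2) : ℚ) ≤
      3 ^ 14 * (2 / 3) ^ 75 * (1 / 4) ^ n * (3 / 4) ^ k := by
  have h₁ : (n + 4) ^ 2 - 2 = (n ^ 2 + 8 * n) + 14 := by
    rw [show (n + 4) ^ 2 = n ^ 2 + 8 * n + 14 + 2 by ring, Nat.add_sub_cancel]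
  have h₂ : 3 * (n ^ 2 + 8 * n) + 4 * n + 75 + k ≤
      n ^ 3 + 14 * n ^ 2 + 63 * n + 84 + k - (n + 4 - 1) ^ 2 := by
    refine Nat.le_sub_of_add_le ?_
    rw [Nat.add_sub_assoc (by norm_num)]
    nlinarith
  calc (3 ^ ((n + 4) ^ 2 - 2) *
        (2 / 3) ^ (n ^ 3 + 14 * n ^ 2 + 63 * n + 84 + k - (n + 4 - 1) ^ 2) : ℚ)
    _ ≤ 3 ^ ((n ^ 2 + 8 * n) + 14) * (2 / 3) ^ (3 * (n ^ 2 + 8 * n) + 4 * n + 75 + k) := by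
      rw [h₁]
      gcongr 3 ^ _ * ?_
      exact pow_le_pow_of_le_one (by norm_num) (by norm_num) h₂
    _ = 3 ^ 14 * (2 / 3) ^ 75 * ((3 * (2 / 3) ^ 3) ^ (n ^ 2 + 8 * n) * ((2 / 3) ^ 4) ^ n) *
        (2 / 3) ^ k := by
      simp only [mul_pow _ _ (n ^ 2 + 8 * n), ← pow_mul, pow_add]
      ring
    _ ≤ 3 ^ 14 * (2 / 3) ^ 75 * (1 ^ (n ^ 2 + 8 * n) * (1 / 4) ^ n) * (3 / 4) ^ k := by
      gcongr 3 ^ 14 * (2 / 3) ^ 75 * (?_ ^ _ * ?_ ^ _) * ?_ ^ _ <;> norm_num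
    _ = 3 ^ 14 * (2 / 3) ^ 75 * (1 / 4) ^ n * (3 / 4) ^ k := by
      rw [one_pow, one_mul]

theorem light_bound_le (n k : ℕ) :
    ((9 / 10) ^ (6 * (n ^ 3 + 14 * n ^ 2 + 63 * n + 84 + k) - 6 * (n + 4) ^ 3) : ℚ) ≤
      (9 / 10) ^ 120 * (1 / 4) ^ n * (3 / 4) ^ k :=
  calc ((9 / 10) ^ (6 * (n ^ 3 + 14 * n ^ 2 + 63 * n + 84 + k) - 6 * (n + 4) ^ 3) : ℚ)
    _ ≤ (9 / 10) ^ (120 + 14 * n + 6 * k) :=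
      pow_le_pow_of_le_one (by norm_num) (by norm_num) (Nat.le_sub_of_add_le (by nlinarith))
    _ = (9 / 10) ^ 120 * ((9 / 10) ^ 14) ^ n * ((9 / 10) ^ 6) ^ k := by
      rw [pow_add, pow_add, pow_mul, pow_mul]
    _ ≤ (9 / 10) ^ 120 * (1 / 4) ^ n * (3 / 4) ^ k := by gcongr <;> norm_num

theorem wide_bound_le (n k : ℕ) :
    ((1 / 2) ^ ((n ^ 3 + 14 * n ^ 2 + 63 * n + 84 + k) / 2 + 1) : ℚ) ≤
      (3 / 4) ^ 84 * (1 / 4) ^ n * (3 / 4) ^ k :=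
  calc ((1 / 2) ^ ((n ^ 3 + 14 * n ^ 2 + 63 * n + 84 + k) / 2 + 1) : ℚ)
    _ ≤ ((3 / 4) ^ 2) ^ ((n ^ 3 + 14 * n ^ 2 + 63 * n + 84 + k) / 2 + 1) := by
      gcongr
      norm_num
    _ ≤ (3 / 4) ^ (84 + 5 * n + k) := by
      rw [← pow_mul]
      exact pow_le_pow_of_le_one (by norm_num) (by norm_num) (by lia)
    _ = (3 / 4) ^ 84 * ((3 / 4) ^ 5) ^ n * (3 / 4) ^ k := by rw [pow_add, pow_add, pow_mul]
    _ ≤ (3 / 4) ^ 84 * (1 / 4) ^ n * (3 / 4) ^ k := by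
      gcongr
      norm_num

theorem sum_bounds_le (hq : 4 ≤ q) (hd : q ^ 3 + 2 * q ^ 2 ≤ d + q + 8) :
    2 * d * (d * (3 ^ (q ^ 2 - 2) * (2 / 3) ^ (d - (q - 1) ^ 2) + (9 / 10) ^ (6 * d - 6 * q ^ 3) +
      (1 / 2) ^ (d / 2 + 1)) : ℚ) ≤ 1 / 4 := by
  obtain ⟨n, k, rfl, rfl⟩ := exists_eq_add_of_degree_bound hq hd
  grw [many_marked_bound_le, light_bound_le, wide_bound_le, cubic_add_le, cubic_add_le]
  calc _
    _ = (2 * 2 * (1 / 4)) ^ n * ((9 / 8) * (9 / 8) * (3 / 4)) ^ k *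
        (2 * 84 * 84 * (3 ^ 14 * (2 / 3) ^ 75 + (9 / 10) ^ 120 + (3 / 4) ^ 84) : ℚ) := by
      simp only [mul_pow _ _ n, mul_pow _ _ k]
      ring
    _ ≤ 1 ^ n * 1 ^ k * (1 / 4) := by gcongr <;> norm_num
    _ = 1 / 4 := by norm_num

end Estimates

section Weights

theorem monotone_bool_iff {α : Type*} [Preorder α] {f : Bool → α} :
    Monotone f ↔ f false ≤ f true :=
  ⟨fun h ↦ h (Bool.false_le _), fun h ↦ by
    rintro (_ | _) (_ | _) hab
    exacts [le_rfl, h, absurd hab (by decide), le_rfl]⟩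

/-- The number of selections that a vertex of slack `t` may take part in; `w` records whether the
vertex is marked. -/
def capacity (q t : ℕ) (w : Bool) : ℕ :=
  (t - 1) / (q - 1) + if t ≤ (q - 1) ^ 2 ∧ w = true then q + 1 else 0

/-- The weight, in units of `1 / (6 * q ^ 2)`, with which a vertex of slack `t` is selected; `w`
records whether the vertex is marked. The values 36, 11 and 3 make the total weight over the
selections that a vertex takes part in at most its capacity, while the mean of `(9 / 10) ^ weight`
over a random mark is at most `(9 / 10) ^ 6`. -/
def weight (q t : ℕ) (w : Bool) : ℕ :=
  if t ≤ (q - 1) ^ 2 then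
    if t < q then (if w then 36 else 0) else if w then 11 else 3
  else 6

variable {q t : ℕ}

theorem weight_le (hq : 3 ≤ q) (t : ℕ) (w : Bool) : weight q t w ≤ 6 * q ^ 2 := by
  unfold weight
  split_ifs <;> nlinarith

theorem weight_mul_le (hq : 3 ≤ q) (ht : 1 ≤ t) (w : Bool) :
    weight q t w * t ≤ 6 * q * capacity q t w := by
  obtain ⟨n, rfl⟩ := Nat.exists_eq_add_of_le' hq
  have hlt : t - 1 < (t - 1) / (n + 2) * (n + 2) + (n + 2) := Nat.lt_div_mul_add (by simp)
  simp only [weight, capacity, show n + 3 - 1 = n + 2 from rfl]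
  set b := (t - 1) / (n + 2)
  have hle : t ≤ (n + 2) * (b + 1) := by lia
  by_cases hlow : t ≤ (n + 2) ^ 2
  · by_cases hsmall : t < n + 3
    · cases w
      · simp [hlow, hsmall]
      · simp only [hlow, hsmall, and_self, if_true]
        nlinarith
    · have hb : 1 ≤ b := by
        by_contra! hb
        rw [Nat.lt_one_iff.1 hb] at hle
        lia
      cases w <;> simp only [hlow, hsmall, and_self, Bool.false_eq_true, and_false, if_true,
        if_false] <;> nlinarith
  · have hb : n + 2 ≤ b := by
      by_contra! hb
      nlinarith
    simp only [hlow, false_and, if_false, add_zero]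
    nlinarith

theorem capacity_false_mul_lt (q : ℕ) (ht : 1 ≤ t) : (q - 1) * capacity q t false < t := by
  have := Nat.mul_div_le (t - 1) (q - 1)
  simp only [capacity, Bool.false_eq_true, and_false, if_false, add_zero]
  lia

theorem capacity_true_mul_add_two_le (ht : 1 ≤ t) (htq : t ≤ (q - 1) ^ 2) :
    (q - 1) * capacity q t true + 2 ≤ t + q ^ 2 := by
  have hlt := capacity_false_mul_lt q ht
  have heq : capacity q t true = capacity q t false + (q + 1) := by simp [capacity, htq]
  have hq : 1 ≤ q := by
    by_contra! hq
    simp_all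
  obtain ⟨n, rfl⟩ := Nat.exists_eq_add_of_le' hq
  rw [heq]
  simp only [Nat.add_sub_cancel] at hlt ⊢
  nlinarith

theorem weight_mono (q t : ℕ) : Monotone (weight q t) :=
  monotone_bool_iff.2 <| by
    unfold weight
    split_ifs <;> simp_all

theorem weight_eq_of_lt (h : (q - 1) ^ 2 < t) (w : Bool) : weight q t w = 6 := by
  simp [weight, h.not_ge]

open Finset in
open scoped BigOperators in
theorem expect_pow_weight_le (q t : ℕ) :
    𝔼 w, (9 / 10 : ℚ≥0) ^ weight q t w ≤ (9 / 10) ^ 6 := by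
  suffices h : ((9 / 10) ^ weight q t true + (9 / 10) ^ weight q t false : ℚ) / 2 ≤ (9 / 10) ^ 6 by
    rw [Fintype.expect_eq_sum_div_card, Fintype.sum_bool, Fintype.card_bool]
    exact_mod_cast h
  unfold weight
  split_ifs <;> simp_all <;> norm_num

end Weights

section MarkingEvents

open Finset
open scoped BigOperators

variable {ι V : Type*} [Fintype ι] [DecidableEq ι] (c : V ↪ ι × Bool) (S : Finset V)

theorem dens_le_card_filter_marking_le (k : ℕ) :
    dens {ω : ι → Bool | k ≤ #{v ∈ S | marking c ω v}} ≤ 2 ^ #S / 3 ^ k := by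
  have hmono : Monotone fun b : Bool ↦ (if b then 3 else 1 : ℚ≥0) :=
    monotone_bool_iff.2 (by norm_num)
  have hmean : 𝔼 b : Bool, (if b then 3 else 1 : ℚ≥0) = 2 := by
    rw [Fintype.expect_eq_sum_div_card, Fintype.sum_bool]
    norm_num
  refine dens_le_of_le_prod_marking c S (a := 3 ^ k) (fun _ _ _ _ ↦ hmono.monovary hmono)
    (by positivity) (fun ω hω ↦ ?_) ?_
  · rw [← prod_filter, prod_const]
    exact pow_le_pow_right₀ (by norm_num) (mem_filter.1 hω).2
  · rw [mul_div_cancel₀ _ (by positivity), hmean, prod_const]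

theorem dens_forall_marking_le : dens {ω : ι → Bool | ∀ v ∈ S, marking c ω v} ≤ (1 / 2) ^ #S := by
  have hmono : Monotone fun b : Bool ↦ (if b then 1 else 0 : ℚ≥0) :=
    monotone_bool_iff.2 (by norm_num)
  have hmean : 𝔼 b : Bool, (if b then 1 else 0 : ℚ≥0) = 1 / 2 := by
    rw [Fintype.expect_eq_sum_div_card, Fintype.sum_bool]
    norm_num
  refine dens_le_of_le_prod_marking c S (fun _ _ _ _ ↦ hmono.monovary hmono) one_ne_zero
    (fun ω hω ↦ ?_) ?_
  · rw [prod_eq_one fun v hv ↦ if_pos ((mem_filter.1 hω).2 v hv)]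
  · rw [hmean, prod_const, one_mul]

theorem dens_sum_weight_lt_le (q : ℕ) {k : ℕ} (hk : k ≤ 6 * #S) (t : V → ℕ) :
    dens {ω : ι → Bool | ∑ v ∈ S, weight q (t v) (marking c ω v) < k} ≤
      (9 / 10) ^ (6 * #S - k) := by
  have h₀ : (9 / 10 : ℚ≥0) ≤ 1 := by exact_mod_cast (by norm_num : (9 / 10 : ℚ) ≤ 1)
  have hanti (v : V) : Antitone fun b ↦ (9 / 10 : ℚ≥0) ^ weight q (t v) b :=
    fun _ _ h ↦ pow_le_pow_of_le_one zero_le h₀ (weight_mono q (t v) h)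
  refine dens_le_of_le_prod_marking c S (a := (9 / 10) ^ k)
    (fun v _ w _ ↦ (hanti v).monovary (hanti w)) (by positivity) (fun ω hω ↦ ?_) ?_
  · rw [prod_pow_eq_pow_sum]
    exact pow_le_pow_of_le_one zero_le h₀ (mem_filter.1 hω).2.le
  · calc ∏ v ∈ S, 𝔼 b, (9 / 10 : ℚ≥0) ^ weight q (t v) b
      _ ≤ ∏ _v ∈ S, (9 / 10 : ℚ≥0) ^ 6 := prod_le_prod' fun v _ ↦ expect_pow_weight_le q (t v)
      _ = (9 / 10) ^ k * (9 / 10) ^ (6 * #S - k) := by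
        rw [prod_const, ← pow_mul, ← pow_add, Nat.add_sub_cancel' hk]

theorem dens_many_marked_le {q d t : ℕ} (ht : 1 ≤ t) (htq : t ≤ (q - 1) ^ 2) (hS : #S + t ≤ d) :
    dens {ω : ι → Bool | d ≤ #{v ∈ S | marking c ω v} + (q - 1) * capacity q t true} ≤
      3 ^ (q ^ 2 - 2) * (2 / 3) ^ (d - (q - 1) ^ 2) := by
  have h₀ : (2 / 3 : ℚ≥0) ≤ 1 := by exact_mod_cast (by norm_num : (2 / 3 : ℚ) ≤ 1)
  set κ := (q - 1) * capacity q t true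
  have hκ : κ + 2 ≤ t + q ^ 2 := capacity_true_mul_add_two_le ht htq
  simp only [← Nat.sub_le_iff_le_add]
  refine (dens_le_card_filter_marking_le c S (d - κ)).trans (div_le_of_le_mul₀ zero_le zero_le ?_)
  obtain ⟨e, rfl⟩ := Nat.exists_eq_add_of_le' (le_of_add_le_right hS)
  calc (2 : ℚ≥0) ^ #S
    _ ≤ 2 ^ e := pow_le_pow_right₀ one_le_two (by lia)
    _ = (2 / 3) ^ e * 3 ^ e := by rw [← mul_pow, div_mul_cancel₀ _ (by norm_num)]
    _ ≤ (2 / 3) ^ (e + t - (q - 1) ^ 2) * 3 ^ (q ^ 2 - 2 + (e + t - κ)) := by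
      gcongr ?_ * ?_
      · exact pow_le_pow_of_le_one zero_le h₀ (by lia)
      · exact pow_le_pow_right₀ (by norm_num) (by lia)
    _ = 3 ^ (q ^ 2 - 2) * (2 / 3) ^ (e + t - (q - 1) ^ 2) * 3 ^ (e + t - κ) := by
      rw [pow_add]
      ring

end MarkingEvents

section ExistsMarking

open Finset

variable {ι V : Type*} [Finite V] [DecidableEq V] (c : V ↪ ι × Bool)

theorem exists_marking_forall_not₃ [Fintype ι] [DecidableEq ι] {I₁ I₂ I₃ : Type*}
    [Fintype I₁] [Fintype I₂] [Fintype I₃]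
    {P₁ : I₁ → (V → Bool) → Prop} {P₂ : I₂ → (V → Bool) → Prop} {P₃ : I₃ → (V → Bool) → Prop}
    [∀ i, DecidablePred (P₁ i)] [∀ i, DecidablePred (P₂ i)] [∀ i, DecidablePred (P₃ i)]
    {S₁ : I₁ → Finset V} {S₂ : I₂ → Finset V} {S₃ : I₃ → Finset V} {p₁ p₂ p₃ : ℚ≥0} {d : ℕ}
    (hP₁ : ∀ i, DependsOn (P₁ i) (S₁ i : Set V)) (hP₂ : ∀ i, DependsOn (P₂ i) (S₂ i : Set V))
    (hP₃ : ∀ i, DependsOn (P₃ i) (S₃ i : Set V))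
    (hp₁ : ∀ i, dens {ω : ι → Bool | P₁ i (marking c ω)} ≤ p₁)
    (hp₂ : ∀ i, dens {ω : ι → Bool | P₂ i (marking c ω)} ≤ p₂)
    (hp₃ : ∀ i, dens {ω : ι → Bool | P₃ i (marking c ω)} ≤ p₃)
    (hS₁ : ∀ i, #(S₁ i) ≤ d) (hS₂ : ∀ i, #(S₂ i) ≤ d) (hS₃ : ∀ i, #(S₃ i) ≤ d)
    (hv₁ : ∀ v, #{i | v ∈ S₁ i} ≤ d) (hv₂ : ∀ v, #{i | v ∈ S₂ i} ≤ d)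
    (hv₃ : ∀ v, #{i | v ∈ S₃ i} ≤ d) (hd : 1 ≤ d) (hdp : 2 * d * (d * (p₁ + p₂ + p₃)) ≤ 1 / 4) :
    ∃ ω, (∀ i, ¬P₁ i (marking c ω)) ∧ (∀ i, ¬P₂ i (marking c ω)) ∧ ∀ i, ¬P₃ i (marking c ω) := by
  have hsmall : p₁ + p₂ + p₃ ≤ 1 / 4 := by
    have hd' : (1 : ℚ≥0) ≤ d := by exact_mod_cast hd
    calc p₁ + p₂ + p₃
      _ = 1 * (1 * (p₁ + p₂ + p₃)) := by ring
      _ ≤ 2 * d * (d * (p₁ + p₂ + p₃)) := by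
        gcongr
        exact one_le_mul_of_one_le_of_one_le one_le_two hd'
      _ ≤ 1 / 4 := hdp
  have h₂ : p₂ ≤ p₁ + p₂ + p₃ := le_add_right le_add_self
  let P : I₁ ⊕ I₂ ⊕ I₃ → (V → Bool) → Prop := Sum.elim P₁ (Sum.elim P₂ P₃)
  let S : I₁ ⊕ I₂ ⊕ I₃ → Finset V := Sum.elim S₁ (Sum.elim S₂ S₃)
  let p : I₁ ⊕ I₂ ⊕ I₃ → ℚ≥0 := Sum.elim (fun _ ↦ p₁) (Sum.elim (fun _ ↦ p₂) fun _ ↦ p₃)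
  let hdec : ∀ i, DecidablePred (P i) := Sum.rec ‹_› (Sum.rec ‹_› ‹_›)
  obtain ⟨ω, hω⟩ := exists_marking_forall_not c (P := P) (S := S) (p := p)
    (s := d * (p₁ + p₂ + p₃)) (Sum.rec hP₁ (Sum.rec hP₂ hP₃))
    (Sum.rec hp₁ (Sum.rec hp₂ hp₃))
    (Sum.rec (fun _ ↦ (le_add_right le_self_add).trans hsmall)
      (Sum.rec (fun _ ↦ h₂.trans hsmall) fun _ ↦ le_add_self.trans hsmall))
    (Sum.rec hS₁ (Sum.rec hS₂ hS₃))
    (fun v ↦ by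
      rw [sum_filter, Fintype.sum_sum_type, Fintype.sum_sum_type, ← sum_filter, ← sum_filter,
        ← sum_filter, ← add_assoc]
      simp only [S, p, Sum.elim_inl, Sum.elim_inr, sum_const, nsmul_eq_mul, mul_add]
      gcongr
      exacts [hv₁ v, hv₂ v, hv₃ v]) hdp
  exact ⟨ω, fun i ↦ hω (.inl i), fun i ↦ hω (.inr (.inl i)), fun i ↦ hω (.inr (.inr i))⟩

theorem exists_marking [Finite ι] {q d : ℕ} (hq : 4 ≤ q) (hd : q ^ 3 + 2 * q ^ 2 ≤ d + q + 8)
    (t : V → ℕ) {γ α β : Type*} [Fintype γ] [Fintype α] [Fintype β]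
    {M : γ → Finset V} {u : γ → ℕ} (hu : ∀ i, 1 ≤ u i) (huq : ∀ i, u i ≤ (q - 1) ^ 2)
    (hM : ∀ i, #(M i) + u i ≤ d) (hvM : ∀ v, #{i | v ∈ M i} ≤ d)
    {N : α → Finset V} (hN : ∀ a, #(N a) = d) (hvN : ∀ v, #{a | v ∈ N a} ≤ q * t v)
    {S : β → Finset V} (hS : ∀ b, #(S b) = d / 2 + 1) (hvS : ∀ v, #{b | v ∈ S b} ≤ d) :
    ∃ ω, (∀ i, #{v ∈ M i | marking c ω v} + (q - 1) * capacity q (u i) true < d) ∧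
      (∀ a, 6 * q ^ 3 ≤ ∑ v ∈ N a, weight q (t v) (marking c ω v)) ∧
      ∀ b, ∃ v ∈ S b, marking c ω v = false := by
  classical
  cases nonempty_fintype ι
  have hqd : q ^ 3 ≤ d := by nlinarith
  have hd₂ : 2 ≤ d := (show 2 ≤ q ^ 3 by nlinarith [Nat.pow_le_pow_left hq 3]).trans hqd
  have hqd' : q * (q - 1) ^ 2 ≤ d :=
    calc q * (q - 1) ^ 2
      _ ≤ q * q ^ 2 := by gcongr; exact Nat.sub_le q 1
      _ = q ^ 3 := by ring
      _ ≤ d := hqd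
  let P₁ (i : γ) (w : V → Bool) : Prop :=
    d ≤ #{v ∈ M i | w v} + (q - 1) * capacity q (u i) true
  let P₂ (a : α) (w : V → Bool) : Prop := ∑ v ∈ N a, weight q (t v) (w v) < 6 * q ^ 3
  let P₃ (b : β) (w : V → Bool) : Prop := ∀ v ∈ S b, w v
  have hP₁ (i) : DependsOn (P₁ i) (M i : Set V) := fun w w' h ↦ by
    simp only [P₁, filter_congr fun v hv ↦ Eq.to_iff (congrArg (· = true) (h v hv))]
  have hP₂ (a) : DependsOn (P₂ a) ({v ∈ N a | t v ≤ (q - 1) ^ 2} : Finset V) := fun w w' h ↦ by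
    have (v) (hv : v ∈ N a) : weight q (t v) (w v) = weight q (t v) (w' v) := by
      by_cases htv : t v ≤ (q - 1) ^ 2
      · rw [h v (mem_coe.2 (mem_filter.2 ⟨hv, htv⟩))]
      · rw [weight_eq_of_lt (not_le.1 htv), weight_eq_of_lt (not_le.1 htv)]
    simp only [P₂, sum_congr rfl this]
  have hP₃ (b) : DependsOn (P₃ b) (S b : Set V) := fun w w' h ↦
    propext (forall₂_congr fun v hv ↦ by rw [h v hv])
  have hp₂ (a) : dens {ω : ι → Bool | P₂ a (marking c ω)} ≤ (9 / 10) ^ (6 * d - 6 * q ^ 3) := by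
    simpa only [hN a] using dens_sum_weight_lt_le c (N a) q (by rw [hN a]; lia) t
  have hp₃ (b) : dens {ω : ι → Bool | P₃ b (marking c ω)} ≤ (1 / 2) ^ (d / 2 + 1) := by
    convert dens_forall_marking_le c (S b)
    exact (hS b).symm
  have hvN' (v) : #{a | v ∈ {v ∈ N a | t v ≤ (q - 1) ^ 2}} ≤ d := by
    by_cases htv : t v ≤ (q - 1) ^ 2
    · simpa [htv] using (hvN v).trans ((Nat.mul_le_mul_left q htv).trans hqd')
    · simp [htv]
  obtain ⟨ω, h₁, h₂, h₃⟩ := exists_marking_forall_not₃ c hP₁ hP₂ hP₃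
    (fun i ↦ dens_many_marked_le c (M i) (hu i) (huq i) (hM i)) hp₂ hp₃
    (fun i ↦ le_of_add_le_left (hM i)) (fun a ↦ (card_filter_le _ _).trans (hN a).le)
    (fun b ↦ by rw [hS b]; lia) hvM hvN' hvS (by lia) (by exact_mod_cast sum_bounds_le hq hd)
  exact ⟨ω, by simpa [P₁] using h₁, by simpa [P₂] using h₂, by simpa [P₃] using h₃⟩

end ExistsMarking

section Selection

open Finset

theorem exists_injective_of_fractional_matching {X Y : Type*} [Fintype X] [Fintype Y]
    {w : X → Y → ℚ≥0} (hrow : ∀ x, 1 ≤ ∑ y, w x y) (hcol : ∀ y, ∑ x, w x y ≤ 1) :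
    ∃ f : X → Y, Function.Injective f ∧ ∀ x, w x (f x) ≠ 0 := by
  classical
  let supp (x : X) : Finset Y := {y | w x y ≠ 0}
  suffices hall : ∀ S : Finset X, #S ≤ #(S.biUnion supp) by
    obtain ⟨f, hf, hmem⟩ := (all_card_le_biUnion_card_iff_exists_injective supp).1 hall
    exact ⟨f, hf, fun x ↦ by simpa [supp] using hmem x⟩
  intro S
  have hsupp (x) (hx : x ∈ S) : ∑ y, w x y = ∑ y ∈ S.biUnion supp, w x y := by
    refine (sum_subset (subset_univ _) fun y _ hy ↦ ?_).symm
    by_contra h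
    exact hy (mem_biUnion.2 ⟨x, hx, by simpa [supp] using h⟩)
  have hcard : (#S : ℚ≥0) ≤ #(S.biUnion supp) :=
    calc (#S : ℚ≥0)
      _ = ∑ x ∈ S, 1 := by simp
      _ ≤ ∑ x ∈ S, ∑ y, w x y := sum_le_sum fun x _ ↦ hrow x
      _ = ∑ y ∈ S.biUnion supp, ∑ x ∈ S, w x y := by rw [sum_congr rfl hsupp, sum_comm]
      _ ≤ ∑ y ∈ S.biUnion supp, 1 :=
        sum_le_sum fun y _ ↦ (sum_le_sum_of_subset (subset_univ S)).trans (hcol y)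
      _ = #(S.biUnion supp) := by simp
  exact_mod_cast hcard

variable {α V : Type*} [Fintype α] [Fintype V] [DecidableEq α] [DecidableEq V]
  {z : α → V → ℚ≥0} {k : α → ℕ} {m : V → ℕ}

/-- A fractional perfect matching encoding a fractional selection `z`, in which `a` has `k a` tokens
and `v` has `m v` slots. A token of `a` is matched to a pair `(a, v)`; the copy of that pair on the
other side is then matched to a slot of `v`, while a pair that receives no token is matched to its
own copy. -/
def selectionWeight (z : α → V → ℚ≥0) (k : α → ℕ) (m : V → ℕ) :
    (Σ a, Fin (k a)) ⊕ α × V → α × V ⊕ (Σ v, Fin (m v)) → ℚ≥0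
  | .inl i, .inl y => if i.1 = y.1 then z i.1 y.2 / ∑ u, z i.1 u else 0
  | .inl _, .inr _ => 0
  | .inr x, .inl y => if x = y then 1 - z x.1 x.2 else 0
  | .inr x, .inr j => if x.2 = j.1 then z x.1 x.2 / m j.1 else 0

theorem sum_selectionWeight_right (hz : ∀ a v, z a v ≤ 1) (hrow : ∀ a, k a ≤ ∑ v, z a v)
    (hcol : ∀ v, ∑ a, z a v ≤ m v) (x) : ∑ y, selectionWeight z k m x y = 1 := by
  obtain ⟨a, i⟩ | ⟨a, v⟩ := x
  · have hpos : 0 < ∑ v, z a v := lt_of_lt_of_le (by exact_mod_cast i.pos) (hrow a)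
    simp [selectionWeight, Fintype.sum_prod_type, ← sum_div, div_self hpos.ne']
  · have hm : m v * (z a v / m v) = z a v := by
      refine mul_div_cancel_of_imp' fun h ↦ ?_
      exact le_zero_iff.1 ((single_le_sum_of_canonicallyOrdered (f := fun a ↦ z a v)
        (mem_univ a)).trans (h ▸ hcol v))
    simp only [selectionWeight, Fintype.sum_sum_type, Fintype.sum_sigma, sum_ite_irrel, sum_ite_eq,
      sum_const, card_univ, Fintype.card_fin, nsmul_eq_mul, mul_zero, mem_univ, if_true, hm]
    exact tsub_add_cancel_of_le (hz a v)

theorem sum_selectionWeight_left_le (hz : ∀ a v, z a v ≤ 1) (hrow : ∀ a, k a ≤ ∑ v, z a v)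
    (hcol : ∀ v, ∑ a, z a v ≤ m v) (y) : ∑ x, selectionWeight z k m x y ≤ 1 := by
  obtain ⟨a, v⟩ | ⟨v, j⟩ := y
  · have hk : k a * (z a v / ∑ u, z a u) ≤ z a v := by
      rw [← mul_div_assoc]
      refine div_le_of_le_mul₀ zero_le zero_le ?_
      rw [mul_comm]
      gcongr
      exact hrow a
    simp only [selectionWeight, Fintype.sum_sum_type, Fintype.sum_sigma, sum_ite_irrel, sum_ite_eq',
      sum_const, card_univ, Fintype.card_fin, nsmul_eq_mul, mul_zero, mem_univ, if_true]
    calc k a * (z a v / ∑ u, z a u) + (1 - z a v)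
      _ ≤ z a v + (1 - z a v) := by gcongr
      _ = 1 := add_tsub_cancel_of_le (hz a v)
  · have hm : (0 : ℚ≥0) < m v := by exact_mod_cast j.pos
    simp only [selectionWeight, Fintype.sum_sum_type, Fintype.sum_prod_type, sum_ite_eq',
      sum_const_zero, ← sum_div, mem_univ, if_true, zero_add]
    exact (div_le_one hm).2 (hcol v)

theorem exists_selection_of_injective {f : (Σ a, Fin (k a)) ⊕ α × V → α × V ⊕ (Σ v, Fin (m v))}
    (hf : Function.Injective f) (hfz : ∀ x, selectionWeight z k m x (f x) ≠ 0) :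
    ∃ Q : α → Finset V, (∀ a, #(Q a) = k a) ∧ (∀ a, ∀ v ∈ Q a, z a v ≠ 0) ∧
      ∀ v, #{a | v ∈ Q a} ≤ m v := by
  have token (a i) : ∃ v, f (.inl ⟨a, i⟩) = .inl (a, v) ∧ z a v ≠ 0 := by
    have := hfz (.inl ⟨a, i⟩)
    rcases hy : f (.inl ⟨a, i⟩) with ⟨b, v⟩ | j
    · obtain ⟨rfl, h, -⟩ : a = b ∧ z a v ≠ 0 ∧ _ := by
        simpa only [selectionWeight, hy, ne_eq, ite_eq_right_iff, Classical.not_imp,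
          div_eq_zero_iff, not_or] using this
      exact ⟨v, rfl, h⟩
    · exact absurd (by simp only [selectionWeight, hy]) this
  choose g hg hgz using token
  have slot (a i) : ∃ j, f (.inr (a, g a i)) = .inr ⟨g a i, j⟩ := by
    have := hfz (.inr (a, g a i))
    rcases hy : f (.inr (a, g a i)) with y | ⟨v, j⟩
    · obtain ⟨rfl, -⟩ : (a, g a i) = y ∧ _ := by
        simpa only [selectionWeight, hy, ne_eq, ite_eq_right_iff, Classical.not_imp] using this
      rw [← hg a i] at hy
      exact absurd (hf hy) Sum.inr_ne_inl
    · obtain ⟨rfl, -⟩ : g a i = v ∧ _ := by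
        simpa only [selectionWeight, hy, ne_eq, ite_eq_right_iff, Classical.not_imp] using this
      exact ⟨j, rfl⟩
  have hg_inj (a) : Function.Injective (g a) := fun i j hij ↦ by
    have : f (.inl ⟨a, i⟩) = f (.inl ⟨a, j⟩) := by rw [hg, hg, hij]
    simpa using hf this
  refine ⟨fun a ↦ univ.image (g a), fun a ↦ ?_, fun a v hv ↦ ?_, fun v ↦ ?_⟩
  · rw [card_image_of_injective _ (hg_inj a), card_univ, Fintype.card_fin]
  · obtain ⟨i, -, rfl⟩ := mem_image.1 hv
    exact hgz a i
  · have hslot (a : {a // v ∈ univ.image (g a)}) :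
        ∃ j : Fin (m v), f (.inr (a.1, v)) = .inr ⟨v, j⟩ := by
      obtain ⟨a, ha⟩ := a
      obtain ⟨i, -, rfl⟩ := mem_image.1 ha
      exact slot a i
    choose s hs using hslot
    have hs_inj : Function.Injective s := fun a b hab ↦ by
      have : f (.inr (a.1, v)) = f (.inr (b.1, v)) := by rw [hs, hs, hab]
      exact Subtype.ext (by simpa using hf this)
    simpa only [Fintype.card_subtype, Fintype.card_fin] using Fintype.card_le_of_injective s hs_inj

theorem exists_selection_of_fractional (hz : ∀ a v, z a v ≤ 1) (hrow : ∀ a, k a ≤ ∑ v, z a v)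
    (hcol : ∀ v, ∑ a, z a v ≤ m v) :
    ∃ Q : α → Finset V, (∀ a, #(Q a) = k a) ∧ (∀ a, ∀ v ∈ Q a, z a v ≠ 0) ∧
      ∀ v, #{a | v ∈ Q a} ≤ m v := by
  obtain ⟨f, hf, hfz⟩ := exists_injective_of_fractional_matching
    (fun x ↦ (sum_selectionWeight_right hz hrow hcol x).ge)
    (sum_selectionWeight_left_le hz hrow hcol)
  exact exists_selection_of_injective hf hfz

end Selection

open Finset in
theorem exists_selection_of_weight {α V : Type*} [Fintype α] [Finite V] [DecidableEq V] {q : ℕ}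
    (hq : 3 ≤ q) {N : α → Finset V} {t : V → ℕ} {w : V → Bool}
    (hrow : ∀ a, 6 * q ^ 3 ≤ ∑ v ∈ N a, weight q (t v) (w v))
    (hcol : ∀ v, #{a | v ∈ N a} ≤ q * t v) :
    ∃ Q : α → Finset V, (∀ a, #(Q a) = q) ∧ (∀ a, Q a ⊆ N a) ∧
      ∀ v, #{a | v ∈ Q a} ≤ capacity q (t v) (w v) := by
  classical
  cases nonempty_fintype V
  have hq₀ : (0 : ℚ≥0) < 6 * q ^ 2 := by positivity
  let z (a : α) (v : V) : ℚ≥0 := if v ∈ N a then weight q (t v) (w v) / (6 * q ^ 2) else 0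
  have hz (a v) : z a v ≤ 1 := by
    dsimp only [z]
    split_ifs
    · rw [div_le_one hq₀]
      exact_mod_cast weight_le hq (t v) (w v)
    · exact zero_le_one
  have hzrow (a) : (q : ℚ≥0) ≤ ∑ v, z a v := by
    rw [sum_ite_mem, univ_inter, ← sum_div, le_div_iff₀ hq₀]
    calc (q * (6 * q ^ 2) : ℚ≥0)
      _ = (6 * q ^ 3 : ℕ) := by push_cast; ring
      _ ≤ ∑ v ∈ N a, (weight q (t v) (w v) : ℚ≥0) := by exact_mod_cast hrow a
  have hzcol (v) : ∑ a, z a v ≤ capacity q (t v) (w v) := by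
    rw [← sum_filter, sum_const, nsmul_eq_mul, ← mul_div_assoc, div_le_iff₀ hq₀]
    have : #{a | v ∈ N a} * weight q (t v) (w v) ≤ capacity q (t v) (w v) * (6 * q ^ 2) := by
      obtain htv | htv := Nat.eq_zero_or_pos (t v)
      · have hzero : #{a | v ∈ N a} = 0 := by simpa [htv] using hcol v
        simp only [hzero, zero_mul, zero_le]
      · calc #{a | v ∈ N a} * weight q (t v) (w v)
          _ ≤ q * t v * weight q (t v) (w v) := by gcongr; exact hcol v
          _ = q * (weight q (t v) (w v) * t v) := by ring
          _ ≤ q * (6 * q * capacity q (t v) (w v)) := by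
            grw [weight_mul_le hq htv (w v)]
          _ = capacity q (t v) (w v) * (6 * q ^ 2) := by ring
    exact_mod_cast this
  obtain ⟨Q, hcard, hQ, hcap⟩ := exists_selection_of_fractional (k := fun _ ↦ q) hz hzrow hzcol
  refine ⟨Q, hcard, fun a v hv ↦ ?_, hcap⟩
  by_contra h
  exact hQ a v hv (if_neg h)

section Core

open Finset

variable {V : Type*} {N : Finset V} {e : V → ℕ} {d : ℕ}

theorem two_mul_sum_le_of_card_filter_le {s : ℕ} (hs : 2 * s ≤ d) (hed : ∀ w ∈ N, e w < d)
    (hN : #{w ∈ N | d < 2 * e w} ≤ 1) (hle : #{w ∈ N | s < e w} ≤ s + 1) :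
    2 * ∑ w ∈ N, e w ≤ #N * (2 * s) + (s + 1) * (d - 2 * s) + (d - 2) :=
  calc 2 * ∑ w ∈ N, e w
    _ = ∑ w ∈ N, 2 * e w := mul_sum ..
    _ ≤ ∑ w ∈ N, (2 * s + (if s < e w then d - 2 * s else 0) +
          if d < 2 * e w then d - 2 else 0) := by
      gcongr with w hw
      have := hed w hw
      split_ifs <;> omega
    _ = #N * (2 * s) + #{w ∈ N | s < e w} * (d - 2 * s) +
          #{w ∈ N | d < 2 * e w} * (d - 2) := by
      simp only [sum_add_distrib, sum_const, ← sum_filter, smul_eq_mul]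
    _ ≤ #N * (2 * s) + (s + 1) * (d - 2 * s) + 1 * (d - 2) := by gcongr
    _ = _ := by rw [one_mul]

theorem lt_card_filter_le_of_mul_le_sum (hN : N.Nonempty) (hed : ∀ w ∈ N, e w < d)
    (hheavy : #{w ∈ N | d < 2 * e w} ≤ 1) (hNd : 2 * #N ≤ d) {R : ℕ} (hRN : R ≤ #N)
    (hR : R * (d + 1 - R) ≤ ∑ w ∈ N, e w) : R < #{w ∈ N | R ≤ e w} := by
  obtain _ | s := R
  · simpa using hN
  by_contra! hlt
  have hsum := two_mul_sum_le_of_card_filter_le (s := s) (by omega) hed hheavy hlt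
  obtain ⟨y, hy⟩ := Nat.exists_eq_add_of_le hRN
  obtain ⟨u, rfl⟩ := Nat.exists_eq_add_of_le hNd
  have hsubs : 2 * #N + u + 1 - (s + 1) = s + 2 + 2 * y + u ∧
      2 * #N + u - 2 * s = 2 + 2 * y + u ∧ 2 * #N + u - 2 = 2 * s + 2 * y + u := by omega
  rw [hsubs.1] at hR
  rw [hsubs.2.1, hsubs.2.2, hy] at hsum
  nlinarith [Nat.zero_le (s * u)]

/-- A core of the boundary `N` of a piece, where `w ∈ N` sends `e w` edges to the piece: joining
its elements pairwise costs each `w` at most `e w` in degree, and a coloring that is injective on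
it has, whatever the number `r` of its colors on `N`, a color class sending at most `d - r` edges
to the piece. -/
structure IsCore (N : Finset V) (e : V → ℕ) (d : ℕ) (K : Finset V) : Prop where
  subset : K ⊆ N
  card_le : ∀ w ∈ K, #K ≤ e w + 1
  sum_lt : ∀ r, #K ≤ r → r ≤ #N → ∑ w ∈ N, e w < r * (d + 1 - r)

theorem exists_isCore (hN : N.Nonempty) (hed : ∀ w ∈ N, e w < d)
    (hheavy : #{w ∈ N | d < 2 * e w} ≤ 1) (hNd : 2 * #N ≤ d) : ∃ K, IsCore N e d K := by
  let P (r : ℕ) : Prop := r * (d + 1 - r) ≤ ∑ w ∈ N, e w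
  have hP : P (Nat.findGreatest P #N) :=
    Nat.findGreatest_spec (P := P) (zero_le (a := #N)) (by simp [P])
  obtain ⟨K, hK, hcard⟩ := exists_subset_card_eq
    (lt_card_filter_le_of_mul_le_sum hN hed hheavy hNd (Nat.findGreatest_le _) hP)
  refine ⟨K, hK.trans (filter_subset _ _), fun w hw ↦ ?_, fun r hr hrN ↦ ?_⟩
  · rw [hcard]
    exact Nat.succ_le_succ (mem_filter.1 (hK hw)).2
  · exact not_le.1 (Nat.findGreatest_is_greatest (P := P) (by omega) hrN)

end Core

section DegreeIn

open Finset

open scoped Classical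

variable {V : Type*} {G : SimpleGraph V} {S T : Finset V} {v : V}

/-- The number of neighbors of `v` in `S`; for `v ∈ S` this is the degree of `v` in `G[S]`. -/
noncomputable def degIn (G : SimpleGraph V) (S : Finset V) (v : V) : ℕ :=
  #{u ∈ S | G.Adj v u}

theorem card_neighborFinset_inter [Fintype V] [DecidableEq V] [DecidableRel G.Adj] :
    #(G.neighborFinset v ∩ S) = degIn G S v := by
  rw [degIn]
  congr 1
  ext u
  simp [and_comm]

theorem degIn_pos : 0 < degIn G S v ↔ ∃ u ∈ S, G.Adj v u := by
  rw [degIn, card_pos, filter_nonempty_iff]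

theorem degIn_mono (h : S ⊆ T) : degIn G S v ≤ degIn G T v :=
  card_le_card (filter_subset_filter _ h)

theorem degIn_lt_degIn (h : S ⊆ T) {u : V} (huT : u ∈ T) (huS : u ∉ S) (hvu : G.Adj v u) :
    degIn G S v < degIn G T v :=
  card_lt_card ⟨filter_subset_filter _ h, fun hsub ↦
    huS (mem_filter.1 (hsub (mem_filter.2 ⟨huT, hvu⟩))).1⟩

theorem sum_degIn_le {ι : Type*} {I : Finset ι} {s : ι → Finset V} (hs : ∀ i ∈ I, s i ⊆ T)
    (hdisj : (I : Set ι).PairwiseDisjoint s) : ∑ i ∈ I, degIn G (s i) v ≤ degIn G T v := by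
  have hdisj' : (I : Set ι).PairwiseDisjoint fun i ↦ {u ∈ s i | G.Adj v u} :=
    hdisj.mono fun _ ↦ filter_subset _ _
  unfold degIn
  rw [← card_biUnion hdisj']
  exact card_le_card (biUnion_subset.2 fun i hi ↦ filter_subset_filter _ (hs i hi))

theorem degIn_add_degIn_le {S' : Finset V} (hS : S ⊆ T) (hS' : S' ⊆ T) (h : Disjoint S S') :
    degIn G S v + degIn G S' v ≤ degIn G T v := by
  unfold degIn
  rw [← card_union_of_disjoint (disjoint_filter_filter h), ← filter_union]
  exact card_le_card (filter_subset_filter _ (union_subset hS hS'))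

variable {α : Type*} {Q : α → Finset V}

/-- The graph in which every `Q a` is a clique. -/
def cliqueUnion (Q : α → Finset V) : SimpleGraph V where
  Adj u v := u ≠ v ∧ ∃ a, u ∈ Q a ∧ v ∈ Q a
  symm := ⟨fun _ _ ⟨hne, a, hu, hv⟩ ↦ ⟨hne.symm, a, hv, hu⟩⟩

theorem degIn_sup_cliqueUnion_le [Fintype α] :
    degIn (G ⊔ cliqueUnion Q) S v ≤ degIn G S v + ∑ a with v ∈ Q a, (#(Q a) - 1) :=
  calc degIn (G ⊔ cliqueUnion Q) S v
    _ ≤ #({u ∈ S | G.Adj v u} ∪ ({a | v ∈ Q a} : Finset α).biUnion fun a ↦ (Q a).erase v) := by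
      refine card_le_card fun u hu ↦ ?_
      have hu' : u ∈ S ∧ (G ⊔ cliqueUnion Q).Adj v u := by simpa using hu
      obtain ⟨huS, hvu | ⟨hne, a, hva, hua⟩⟩ := hu'
      · exact mem_union_left _ (mem_filter.2 ⟨huS, hvu⟩)
      · exact mem_union_right _ (mem_biUnion.2
          ⟨a, mem_filter_univ _ |>.2 hva, mem_erase.2 ⟨hne.symm, hua⟩⟩)
    _ ≤ degIn G S v + ∑ a with v ∈ Q a, #((Q a).erase v) := by
      grw [card_union_le, card_biUnion_le, degIn]
    _ = degIn G S v + ∑ a with v ∈ Q a, (#(Q a) - 1) := by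
      congr 1
      exact sum_congr rfl fun a ha ↦ card_erase_of_mem ((mem_filter_univ a).1 ha)

/-- The boundary of `C` in `S`: the vertices of `S` with a neighbor in `C`. -/
noncomputable def nbrsIn (G : SimpleGraph V) (S C : Finset V) : Finset V :=
  {w ∈ S | ∃ z ∈ C, G.Adj w z}

theorem mem_nbrsIn {C : Finset V} {w : V} : w ∈ nbrsIn G S C ↔ w ∈ S ∧ ∃ z ∈ C, G.Adj w z :=
  mem_filter

end DegreeIn

section Piece

open Finset

open scoped Classical

variable {V : Type*} {H : SimpleGraph V} {Z : Finset V}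

theorem exists_adj_of_preconnected (hH : H.Preconnected) {S : Set V} (hS : S.Nonempty)
    (hS' : S ≠ Set.univ) : ∃ v ∈ S, ∃ u ∉ S, H.Adj v u := by
  obtain ⟨v, hv⟩ := hS
  obtain ⟨u, hu⟩ := (Set.ne_univ_iff_exists_notMem S).1 hS'
  obtain ⟨p⟩ := hH v u
  obtain ⟨e, -, hfst, hsnd⟩ := p.exists_boundary_dart S hv hu
  exact ⟨e.fst, hfst, e.snd, hsnd, e.adj⟩

theorem exists_adj_of_preconnected_induce {C T : Finset V}
    (hC : (H.induce (C : Set V)).Preconnected) (hTC : T ⊂ C) (hT : T.Nonempty) :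
    ∃ v ∈ T, ∃ u ∈ C, u ∉ T ∧ H.Adj v u := by
  obtain ⟨x, hx⟩ := hT
  obtain ⟨y, hyC, hyT⟩ := exists_of_ssubset hTC
  obtain ⟨v, hv, u, hu, hvu⟩ := exists_adj_of_preconnected hC (S := {v | v.1 ∈ T})
    ⟨⟨x, hTC.subset hx⟩, hx⟩ ((Set.ne_univ_iff_exists_notMem _).2 ⟨⟨y, hyC⟩, hyT⟩)
  exact ⟨v, hv, u, u.2, hu, hvu⟩

/-- The pieces of `Z`: the connected components of the subgraph of `H` induced on `Z`. -/
abbrev Piece (H : SimpleGraph V) (Z : Finset V) : Type _ :=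
  (H.induce (Z : Set V)).ConnectedComponent

namespace Piece

variable {C D : Piece H Z} {v u : V}

/-- The vertices of a piece, as vertices of the ambient graph. -/
noncomputable def verts (C : Piece H Z) : Finset V :=
  {v ∈ Z | ∃ h : v ∈ (Z : Set V), (H.induce (Z : Set V)).connectedComponentMk ⟨v, h⟩ = C}

theorem mem_verts :
    v ∈ C.verts ↔ ∃ h : v ∈ (Z : Set V), (H.induce (Z : Set V)).connectedComponentMk ⟨v, h⟩ = C :=
  mem_filter.trans (and_iff_right_of_imp Exists.fst)

theorem verts_subset (C : Piece H Z) : C.verts ⊆ Z := filter_subset _ _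

theorem exists_mem_verts (hv : v ∈ Z) : ∃ C : Piece H Z, v ∈ C.verts :=
  ⟨_, mem_verts.2 ⟨hv, rfl⟩⟩

theorem verts_nonempty (C : Piece H Z) : C.verts.Nonempty := by
  obtain ⟨⟨v, hv⟩, hvC⟩ := C.nonempty_supp
  exact ⟨v, mem_verts.2 ⟨hv, hvC⟩⟩

theorem mem_verts_of_adj (hv : v ∈ C.verts) (hu : u ∈ Z) (hvu : H.Adj v u) : u ∈ C.verts := by
  obtain ⟨hvZ, rfl⟩ := mem_verts.1 hv
  exact mem_verts.2 ⟨hu, SimpleGraph.ConnectedComponent.sound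
    (SimpleGraph.Adj.reachable (G := H.induce (Z : Set V)) (u := ⟨u, hu⟩) hvu.symm)⟩

theorem eq_of_mem_verts (hC : v ∈ C.verts) (hD : v ∈ D.verts) : C = D := by
  obtain ⟨_, rfl⟩ := mem_verts.1 hC
  obtain ⟨_, rfl⟩ := mem_verts.1 hD
  rfl

theorem pairwiseDisjoint_verts (s : Set (Piece H Z)) : s.PairwiseDisjoint verts :=
  fun _ _ _ _ hne ↦ disjoint_left.2 fun _ hC hD ↦ hne (eq_of_mem_verts hC hD)

theorem preconnected_induce_verts (C : Piece H Z) :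
    (H.induce (C.verts : Set V)).Preconnected := by
  let φ : C.toSimpleGraph →g H.induce (C.verts : Set V) :=
    ⟨fun x ↦ ⟨x.1.1, mem_verts.2 ⟨x.1.2, x.2⟩⟩, id⟩
  refine C.connected_toSimpleGraph.preconnected.map φ ?_
  rintro ⟨v, hv⟩
  obtain ⟨hvZ, hvC⟩ := mem_verts.1 hv
  exact ⟨⟨⟨v, hvZ⟩, hvC⟩, rfl⟩

theorem sum_degIn_verts_le (I : Finset (Piece H Z)) (v : V) :
    ∑ C ∈ I, degIn H C.verts v ≤ degIn H Z v :=
  sum_degIn_le (fun C _ ↦ C.verts_subset) (pairwiseDisjoint_verts _)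

end Piece

end Piece

section Extension

open Finset

open scoped Classical

variable {V κ : Type*} {d : ℕ} {F F' : SimpleGraph V} {B C S T : Finset V}

/-- `f` is a proper coloring of the subgraph of `F` induced on `S`. -/
def ProperOn (F : SimpleGraph V) (S : Finset V) (f : V → κ) : Prop :=
  ∀ x ∈ S, ∀ y ∈ S, F.Adj x y → f x ≠ f y

/-- The coloring `f` of `S` extends to a proper coloring of `S ∪ T`. -/
def Extendable (F : SimpleGraph V) (S T : Finset V) (f : V → κ) : Prop :=
  ∃ g : V → κ, Set.EqOn g f S ∧ ProperOn F (S ∪ T) g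

namespace ProperOn

theorem mono {f : V → κ} (hf : ProperOn F T f) (hST : S ⊆ T) : ProperOn F S f :=
  fun x hx y hy ↦ hf x (hST hx) y (hST hy)

theorem of_le {f : V → κ} (hf : ProperOn F' S f) (hF : F ≤ F') : ProperOn F S f :=
  fun x hx y hy h ↦ hf x hx y hy (hF h)

theorem sup {f : V → κ} (hf : ProperOn F S f) (hf' : ProperOn F' S f) : ProperOn (F ⊔ F') S f :=
  fun x hx y hy h ↦ h.elim (hf x hx y hy) (hf' x hx y hy)

theorem congr {f g : V → κ} (hf : ProperOn F S f) (h : Set.EqOn g f S) : ProperOn F S g :=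
  fun x hx y hy hxy ↦ by rw [h hx, h hy]; exact hf x hx y hy hxy

theorem injOn_of_cliqueUnion {α : Type*} {Q : α → Finset V} {f : V → κ}
    (hf : ProperOn (cliqueUnion Q) S f) {a : α} (ha : Q a ⊆ S) : Set.InjOn f (Q a) := by
  intro x hx y hy hxy
  by_contra hne
  exact hf x (ha hx) y (ha hy) ⟨hne, a, hx, hy⟩ hxy

theorem extendable_of_ne {f g : V → κ} (hf : ProperOn F S f) (hg : ProperOn F T g)
    (hST : Disjoint S T) (hfg : ∀ x ∈ S, ∀ y ∈ T, F.Adj x y → f x ≠ g y) :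
    Extendable F S T f := by
  refine ⟨S.piecewise f g, fun x hx ↦ piecewise_eq_of_mem _ _ _ hx, fun x hx y hy hxy ↦ ?_⟩
  have hS {x : V} : x ∈ T → x ∉ S := fun hT hS ↦ disjoint_left.1 hST hS hT
  obtain hx | hx := mem_union.1 hx <;> obtain hy | hy := mem_union.1 hy
  · simpa [hx, hy] using hf x hx y hy hxy
  · simpa [hx, hS hy] using hfg x hx y hy hxy
  · simpa [hS hx, hy] using (hfg y hy x hx hxy.symm).symm
  · simpa [hS hx, hS hy] using hg x hx y hy hxy

theorem extendable_singleton {f : V → Fin d} {v : V} (hf : ProperOn F S f) (hv : v ∉ S)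
    (hd : degIn F S v < d) : Extendable F S {v} f := by
  obtain ⟨c, -, hc⟩ := exists_mem_notMem_of_card_lt_card
    (s := ({u ∈ S | F.Adj v u} : Finset V).image f) (t := univ)
    (by simpa using card_image_le.trans_lt hd)
  refine hf.extendable_of_ne (g := fun _ ↦ c) ?_ (disjoint_singleton_right.2 hv) ?_
  · simp [ProperOn]
  · rintro x hx y hy hxy rfl
    rw [mem_singleton] at hy
    exact hc (mem_image_of_mem f (mem_filter.2 ⟨hx, hy ▸ hxy.symm⟩))

theorem extendable_of_degenerate {f : V → Fin d} (hf : ProperOn F S f) (hST : Disjoint S T)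
    (hT : ∀ T' ⊆ T, T'.Nonempty → ∃ v ∈ T', degIn F (S ∪ T') v < d) : Extendable F S T f := by
  induction T using Finset.strongInduction with
  | H T ih =>
    obtain rfl | hne := T.eq_empty_or_nonempty
    · exact ⟨f, Set.eqOn_refl _ _, by simpa using hf⟩
    obtain ⟨v, hv, hd⟩ := hT T subset_rfl hne
    obtain ⟨g, hgf, hg⟩ := ih (T.erase v) (erase_ssubset hv)
      (hST.mono_right (erase_subset _ _)) fun T' hT' ↦ hT T' (hT'.trans (erase_subset _ _))
    have hvS : v ∉ S ∪ T.erase v := by simpa using fun hvS ↦ disjoint_left.1 hST hvS hv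
    obtain ⟨h, hhg, hh⟩ := hg.extendable_singleton hvS
      ((degIn_mono (union_subset_union_right (erase_subset _ _))).trans_lt hd)
    rw [union_assoc, union_comm _ {v}, ← insert_eq, insert_erase hv] at hh
    exact ⟨h, fun x hx ↦ (hhg (mem_union_left _ hx)).trans (hgf hx), hh⟩

theorem extendable_of_degIn_lt {f : V → Fin d} (hf : ProperOn F S f) (hST : Disjoint S T)
    (hd : ∀ v ∈ T, degIn F (S ∪ T) v < d) : Extendable F S T f := by
  refine hf.extendable_of_degenerate hST fun T' hT' ⟨v, hv⟩ ↦ ⟨v, hv, ?_⟩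
  exact (degIn_mono (union_subset_union_right hT')).trans_lt (hd v (hT' hv))

-- Color `C` along decreasing distance to the uncolored vertex `u`.
theorem extendable_of_preconnected {f : V → Fin d} (hf : ProperOn F S f) (hSC : Disjoint S C)
    (hSB : S ⊆ B) (hCB : C ⊆ B) (hd : ∀ v ∈ C, degIn F B v ≤ d)
    (hC : (F.induce (C : Set V)).Preconnected)
    (hout : ∃ z ∈ C, ∃ u ∈ B, u ∉ S ∧ u ∉ C ∧ F.Adj z u) : Extendable F S C f := by
  refine hf.extendable_of_degenerate hSC fun T hTC hT ↦ ?_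
  suffices ∃ v ∈ T, ∃ u ∈ B, u ∉ S ∪ T ∧ F.Adj v u by
    obtain ⟨v, hv, u, huB, hu, hvu⟩ := this
    have hsub : S ∪ T ⊆ B := union_subset hSB (hTC.trans hCB)
    exact ⟨v, hv, (degIn_lt_degIn hsub huB hu hvu).trans_le (hd v (hTC hv))⟩
  obtain rfl | hTC := hTC.eq_or_ssubset
  · obtain ⟨z, hz, u, huB, huS, huC, hzu⟩ := hout
    exact ⟨z, hz, u, huB, by simp [huS, huC], hzu⟩
  · obtain ⟨v, hv, u, huC, huT, hvu⟩ := exists_adj_of_preconnected_induce hC hTC hT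
    exact ⟨v, hv, u, hCB huC, by simpa [huT] using fun huS ↦ disjoint_left.1 hSC huS huC, hvu⟩

theorem extendable_of_forall_piece {Z : Finset V} {f : V → κ} (hf : ProperOn F S f)
    (hSZ : Disjoint S Z) (h : ∀ C : Piece F Z, Extendable F S C.verts f) :
    Extendable F S Z f := by
  choose g hgf hg using h
  let g' (x : V) : κ :=
    if hx : x ∈ (Z : Set V) then g ((F.induce (Z : Set V)).connectedComponentMk ⟨x, hx⟩) x else f x
  have hg' {C : Piece F Z} {x : V} (hx : x ∈ C.verts) : g' x = g C x := by
    obtain ⟨hxZ, rfl⟩ := Piece.mem_verts.1 hx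
    exact dif_pos hxZ
  refine hf.extendable_of_ne (g := g') (fun x hx y hy hxy ↦ ?_) hSZ fun x hx y hy hxy ↦ ?_
  · obtain ⟨C, hxC⟩ := Piece.exists_mem_verts (H := F) hx
    have hyC := Piece.mem_verts_of_adj hxC hy hxy
    rw [hg' hxC, hg' hyC]
    exact hg C x (mem_union_right _ hxC) y (mem_union_right _ hyC) hxy
  · obtain ⟨C, hyC⟩ := Piece.exists_mem_verts (H := F) hy
    rw [hg' hyC, ← hgf C hx]
    exact hg C x (mem_union_left _ hx) y (mem_union_right _ hyC) hxy

theorem extendable_of_swap {f g : V → κ} {c₀ c : κ} (hf : ProperOn F S f) (hg : ProperOn F C g)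
    (hSC : Disjoint S C) (hfg : ∀ w ∈ S, f w ≠ c₀ → ∀ z ∈ C, F.Adj w z → f w ≠ g z)
    (hc₀ : ∀ w ∈ S, f w = c₀ → ∀ z ∈ C, F.Adj w z → g z ≠ c)
    (hc : ∀ w ∈ nbrsIn F S C, f w ≠ c₀ → f w ≠ c) : Extendable F S C f := by
  let σ := Equiv.swap c₀ c
  have hσg : ProperOn F C (σ ∘ g) := fun x hx y hy hxy ↦ σ.injective.ne (hg x hx y hy hxy)
  refine hf.extendable_of_ne hσg hSC fun w hw z hz hwz ↦ ?_
  rw [← Equiv.swap_apply_self c₀ c (f w)]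
  refine σ.injective.ne ?_
  by_cases hfw : f w = c₀
  · rw [hfw, Equiv.swap_apply_left]
    exact (hc₀ w hw hfw z hz hwz).symm
  · rw [Equiv.swap_apply_of_ne_of_ne hfw (hc w (mem_nbrsIn.2 ⟨hw, z, hz, hwz⟩) hfw)]
    exact hfg w hw hfw z hz hwz

theorem exists_color_of_sum_degIn_le {N : Finset V} {f g : V → Fin d} {c₀ : Fin d}
    (hc₀ : c₀ ∈ N.image f) (hle : ∑ w ∈ N with f w = c₀, degIn F C w + #(N.image f) ≤ d) :
    ∃ c, (∀ w ∈ N, f w = c₀ → ∀ z ∈ C, F.Adj w z → g z ≠ c) ∧ ∀ w ∈ N, f w ≠ c₀ → f w ≠ c := by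
  let bad₁ : Finset (Fin d) :=
    ({w ∈ N | f w = c₀} : Finset V).biUnion fun w ↦ ({z ∈ C | F.Adj w z} : Finset V).image g
  let bad₂ : Finset (Fin d) := (N.image f).erase c₀
  have hbad₁ : #bad₁ ≤ ∑ w ∈ N with f w = c₀, degIn F C w :=
    card_biUnion_le.trans (sum_le_sum fun _ _ ↦ card_image_le)
  have hbad₂ : #bad₂ + 1 = #(N.image f) := card_erase_add_one hc₀
  have hbad : #(bad₁ ∪ bad₂) < d := by
    grw [card_union_le]
    omega
  obtain ⟨c, -, hc⟩ := exists_mem_notMem_of_card_lt_card (s := bad₁ ∪ bad₂) (t := univ)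
    (by simpa using hbad)
  rw [notMem_union] at hc
  refine ⟨c, ?_, ?_⟩
  · rintro w hw hfw z hz hwz rfl
    exact hc.1 (mem_biUnion.2 ⟨w, mem_filter.2 ⟨hw, hfw⟩,
      mem_image_of_mem g (mem_filter.2 ⟨hz, hwz⟩)⟩)
  · rintro w hw hfw rfl
    exact hc.2 (mem_erase.2 ⟨hfw, mem_image_of_mem f hw⟩)

theorem extendable_of_sum_colorClass_le {f : V → Fin d} (hf : ProperOn F S f)
    (hSC : Disjoint S C) (hd : ∀ v ∈ C, degIn F (S ∪ C) v ≤ d)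
    (hC : (F.induce (C : Set V)).Preconnected) {c₀ : Fin d} (hc₀ : c₀ ∈ (nbrsIn F S C).image f)
    (hle : ∑ w ∈ nbrsIn F S C with f w = c₀, degIn F C w + #((nbrsIn F S C).image f) ≤ d) :
    Extendable F S C f := by
  have hsub : ({x ∈ S | f x ≠ c₀} : Finset V) ⊆ S := filter_subset _ _
  obtain ⟨w, hw, rfl⟩ := mem_image.1 hc₀
  obtain ⟨hwS, z, hz, hwz⟩ := mem_nbrsIn.1 hw
  obtain ⟨g, hgf, hg⟩ := (hf.mono hsub).extendable_of_preconnected (hSC.mono_left hsub)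
    (hsub.trans subset_union_left) subset_union_right hd hC
    ⟨z, hz, w, mem_union_left _ hwS, by simp, disjoint_left.1 hSC hwS, hwz.symm⟩
  -- Swapping `c₀` and `c` in the coloring of `C` makes `c₀` avoid the neighbors of its class.
  obtain ⟨c, hc, hc'⟩ := exists_color_of_sum_degIn_le (g := g) hc₀ hle
  refine hf.extendable_of_swap (hg.mono subset_union_right) hSC
    (fun x hx hfx y hy hxy ↦ ?_) (fun x hx hfx y hy hxy ↦ ?_) hc'
  · have hx' : x ∈ ({x ∈ S | f x ≠ f w} : Finset V) := mem_filter.2 ⟨hx, hfx⟩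
    rw [← hgf hx']
    exact hg x (mem_union_left _ hx') y (mem_union_right _ hy) hxy
  · exact hc x (mem_nbrsIn.2 ⟨hx, y, hy, hxy⟩) hfx y hy hxy

theorem extendable_of_sum_lt {f : V → Fin d} (hf : ProperOn F S f) (hSC : Disjoint S C)
    (hd : ∀ v ∈ C, degIn F (S ∪ C) v ≤ d) (hC : (F.induce (C : Set V)).Preconnected)
    (hsum : ∑ w ∈ nbrsIn F S C, degIn F C w <
      #((nbrsIn F S C).image f) * (d + 1 - #((nbrsIn F S C).image f))) :
    Extendable F S C f := by
  rw [← sum_fiberwise_of_maps_to (fun w hw ↦ mem_image_of_mem f hw), ← smul_eq_mul,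
    ← sum_const] at hsum
  obtain ⟨c₀, hc₀, hlt⟩ := exists_lt_of_sum_lt hsum
  exact hf.extendable_of_sum_colorClass_le hSC hd hC hc₀ (by omega)

theorem extendable_of_isCore {f : V → Fin d} {K : Finset V} (hf : ProperOn F S f)
    (hSC : Disjoint S C) (hd : ∀ v ∈ C, degIn F (S ∪ C) v ≤ d)
    (hC : (F.induce (C : Set V)).Preconnected) (hK : IsCore (nbrsIn F S C) (degIn F C) d K)
    (hfK : Set.InjOn f K) : Extendable F S C f := by
  refine hf.extendable_of_sum_lt hSC hd hC (hK.sum_lt _ ?_ card_image_le)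
  rw [← card_image_of_injOn hfK]
  exact card_le_card (image_subset_image hK.subset)

theorem extendable_of_isCore_of_piece {f : V → Fin d} {Z : Finset V} {K : Piece F Z → Finset V}
    (hf : ProperOn F S f) (hfK : ProperOn (cliqueUnion K) S f) (hSB : S ⊆ B) (hZB : Z ⊆ B)
    (hSZ : Disjoint S Z) (hZ : ∀ v ∈ Z, degIn F B v ≤ d)
    (hpiece : ∀ C : Piece F Z,
      (∃ z ∈ C.verts, ∃ u ∈ B, u ∉ S ∧ u ∉ Z ∧ F.Adj z u) ∨
        IsCore (nbrsIn F S C.verts) (degIn F C.verts) d (K C)) :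
    Extendable F S Z f := by
  refine hf.extendable_of_forall_piece hSZ fun C ↦ ?_
  have hCB := C.verts_subset.trans hZB
  have hSC := hSZ.mono_right C.verts_subset
  have hC : ∀ v ∈ C.verts, degIn F B v ≤ d := fun v hv ↦ hZ v (C.verts_subset hv)
  obtain ⟨z, hz, u, hu, huS, huZ, hzu⟩ | hK := hpiece C
  · exact hf.extendable_of_preconnected hSC hSB hCB hC C.preconnected_induce_verts
      ⟨z, hz, u, hu, huS, fun huC ↦ huZ (C.verts_subset huC), hzu⟩
  · exact hf.extendable_of_isCore hSC
      (fun v hv ↦ (degIn_mono (union_subset hSB hCB)).trans (hC v hv)) C.preconnected_induce_verts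
      hK (hfK.injOn_of_cliqueUnion (hK.subset.trans (filter_subset _ _)))

theorem cliqueUnion_union {α : Type*} {Q : α → Finset V} {f : V → κ}
    (hf : ProperOn (cliqueUnion Q) S f) (hQ : ∀ a, Disjoint (Q a) T) :
    ProperOn (cliqueUnion Q) (S ∪ T) f := by
  have hS {x : V} {a : α} (hxa : x ∈ Q a) (hx : x ∈ S ∪ T) : x ∈ S :=
    (mem_union.1 hx).resolve_right (disjoint_left.1 (hQ a) hxa)
  rintro x hx y hy ⟨hne, a, hxa, hya⟩
  exact hf x (hS hxa hx) y (hS hya hy) ⟨hne, a, hxa, hya⟩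

end ProperOn

theorem exists_properOn_sup_cliqueUnion {α : Type*} {H : SimpleGraph V} {W Z : Finset V}
    {Q : α → Finset V} {K : Piece H Z → Finset V} (hd : 0 < d) (hWB : W ⊆ B) (hZB : Z ⊆ B)
    (hWZ : Disjoint W Z) (hQZ : ∀ a, Disjoint (Q a) Z)
    (hW : ∀ w ∈ W, degIn (H ⊔ cliqueUnion K ⊔ cliqueUnion Q) W w < d)
    (hZ : ∀ v ∈ Z, degIn H B v ≤ d)
    (hpiece : ∀ C : Piece H Z,
      (∃ z ∈ C.verts, ∃ u ∈ B, u ∉ W ∧ u ∉ Z ∧ H.Adj z u) ∨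
        IsCore (nbrsIn H W C.verts) (degIn H C.verts) d (K C))
    (hrest : ∀ v ∈ B, v ∉ W → v ∉ Z → degIn (H ⊔ cliqueUnion Q) B v < d) :
    ∃ f : V → Fin d, ProperOn (H ⊔ cliqueUnion Q) B f := by
  have hW' : Extendable (H ⊔ cliqueUnion K ⊔ cliqueUnion Q) ∅ W (fun _ ↦ (⟨0, hd⟩ : Fin d)) :=
    ProperOn.extendable_of_degIn_lt (by simp [ProperOn]) (disjoint_empty_left _) (by simpa using hW)
  obtain ⟨f₁, -, hf₁⟩ := hW'
  rw [empty_union] at hf₁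
  have hf₁H : ProperOn H W f₁ := hf₁.of_le (le_sup_left.trans le_sup_left)
  have hf₁K : ProperOn (cliqueUnion K) W f₁ := hf₁.of_le (le_sup_right.trans le_sup_left)
  have hf₁Q : ProperOn (cliqueUnion Q) W f₁ := hf₁.of_le le_sup_right
  obtain ⟨f₂, hf₂₁, hf₂⟩ := hf₁H.extendable_of_isCore_of_piece hf₁K hWB hZB hWZ hZ hpiece
  have hf₂Q := (hf₁Q.congr hf₂₁).cliqueUnion_union hQZ
  have hWZB := union_sdiff_of_subset (union_subset hWB hZB)
  obtain ⟨f, -, hf⟩ : Extendable (H ⊔ cliqueUnion Q) (W ∪ Z) (B \ (W ∪ Z)) f₂ := by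
    refine (hf₂.sup hf₂Q).extendable_of_degIn_lt disjoint_sdiff fun v hv ↦ ?_
    simp only [mem_sdiff, mem_union, not_or] at hv
    rw [hWZB]
    exact hrest v hv.1 hv.2.1 hv.2.2
  exact ⟨f, hWZB ▸ hf⟩

end Extension

section GoodMarking

open Finset

open scoped Classical

variable {V α : Type*} {H G : SimpleGraph V} {L S Z : Finset V} {q d : ℕ} {v : V}

/-- The neighbors in `S` of the piece with vertex set `C` that send more than `d / 2` edges to
it. -/
noncomputable def heavyNbrs (G : SimpleGraph V) (S : Finset V) (d : ℕ) (C : Finset V) : Finset V :=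
  {w ∈ nbrsIn G S C | d < 2 * degIn G C w}

theorem pairwise_disjoint_heavyNbrs (hS : ∀ w ∈ S, degIn H Z w ≤ d) :
    Pairwise (Function.onFun Disjoint fun C : Piece H Z ↦ heavyNbrs H S d C.verts) := by
  refine fun C D hne ↦ disjoint_left.2 fun w hC hD ↦ ?_
  obtain ⟨hwS, hwC⟩ := mem_filter.1 hC
  have hsum := Piece.sum_degIn_verts_le {C, D} w
  rw [sum_pair hne] at hsum
  have hwD := (mem_filter.1 hD).2
  have hwd := hS w (mem_nbrsIn.1 hwS).1
  lia

theorem card_filter_mem_nbrsIn_le (H : SimpleGraph V) (S Z : Finset V) (v : V) :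
    #{C : Piece H Z | v ∈ nbrsIn H S C.verts} ≤ degIn H Z v := by
  rw [card_eq_sum_ones]
  refine (sum_le_sum fun C hC ↦ ?_).trans (Piece.sum_degIn_verts_le _ v)
  have hvC : v ∈ nbrsIn H S C.verts := (mem_filter.1 hC).2
  exact degIn_pos.2 (mem_nbrsIn.1 hvC).2

theorem degIn_sup_cliqueUnion_pieces_le {K : Piece H Z → Finset V}
    (hK : ∀ C, v ∈ K C → #(K C) ≤ degIn H C.verts v + 1) :
    degIn (H ⊔ cliqueUnion K) S v ≤ degIn H S v + degIn H Z v := by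
  refine degIn_sup_cliqueUnion_le.trans (Nat.add_le_add_left ?_ _)
  refine (sum_le_sum fun C hC ↦ ?_).trans (Piece.sum_degIn_verts_le _ v)
  exact Nat.sub_le_of_le_add (hK C ((mem_filter_univ C).1 hC))

theorem degIn_sup_cliqueUnion_le_mul [Fintype α] {Q : α → Finset V} {m : ℕ}
    (hQ : ∀ a, #(Q a) = q) (hm : #{a | v ∈ Q a} ≤ m) :
    degIn (G ⊔ cliqueUnion Q) S v ≤ degIn G S v + (q - 1) * m := by
  refine degIn_sup_cliqueUnion_le.trans (Nat.add_le_add_left ?_ _)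
  simp only [hQ, sum_const, smul_eq_mul]
  rw [mul_comm]
  gcongr

theorem exists_forall_isCore (hL : ∀ w ∈ L, degIn H Z w < d) :
    ∃ K : Piece H Z → Finset V, (∀ C, ∀ w ∈ K C, #(K C) ≤ degIn H C.verts w + 1) ∧
      ∀ C, (nbrsIn H L C.verts).Nonempty → #(heavyNbrs H L d C.verts) ≤ 1 →
        2 * #(nbrsIn H L C.verts) ≤ d →
          IsCore (nbrsIn H L C.verts) (degIn H C.verts) d (K C) := by
  have h (C : Piece H Z) : ∃ K : Finset V, (∀ w ∈ K, #K ≤ degIn H C.verts w + 1) ∧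
      ((nbrsIn H L C.verts).Nonempty → #(heavyNbrs H L d C.verts) ≤ 1 →
        2 * #(nbrsIn H L C.verts) ≤ d → IsCore (nbrsIn H L C.verts) (degIn H C.verts) d K) := by
    by_cases hC : (nbrsIn H L C.verts).Nonempty ∧ #(heavyNbrs H L d C.verts) ≤ 1 ∧
        2 * #(nbrsIn H L C.verts) ≤ d
    · obtain ⟨K, hK⟩ := exists_isCore hC.1 (fun w hw ↦
        (degIn_mono C.verts_subset).trans_lt (hL w (mem_nbrsIn.1 hw).1)) hC.2.1 hC.2.2
      exact ⟨K, hK.card_le, fun _ _ _ ↦ hK⟩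
    · exact ⟨∅, by simp, fun h₁ h₂ h₃ ↦ absurd ⟨h₁, h₂, h₃⟩ hC⟩
  choose K hK hcore using h
  exact ⟨K, hK, hcore⟩

theorem exists_good_marking [Finite V] [Fintype α] (hq : 4 ≤ q)
    (hd : q ^ 3 + 2 * q ^ 2 ≤ d + q + 8) {t : V → ℕ} (ht : ∀ v ∈ L, 1 ≤ t v)
    (htq : ∀ v ∈ L, t v ≤ (q - 1) ^ 2) (hG : ∀ v ∈ L, degIn G L v + t v ≤ d)
    (hZ : ∀ v ∈ L, degIn H Z v ≤ d) {N : α → Finset V} (hN : ∀ a, #(N a) = d)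
    (hvN : ∀ v, #{a | v ∈ N a} ≤ q * t v) :
    ∃ w : V → Bool, (∀ v ∈ L, degIn G {u ∈ L | w u} v + (q - 1) * capacity q (t v) true < d) ∧
      (∀ a, 6 * q ^ 3 ≤ ∑ v ∈ N a, weight q (t v) (w v)) ∧
      ∀ C : Piece H Z, (∀ v ∈ nbrsIn H L C.verts, w v) →
        2 * #(nbrsIn H L C.verts) ≤ d ∧ #(heavyNbrs H L d C.verts) ≤ 1 := by
  obtain ⟨c, hc⟩ := exists_marking_eq_false_of_pairwise_disjoint (pairwise_disjoint_heavyNbrs hZ)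
  have hwide (C : {C : Piece H Z // d < 2 * #(nbrsIn H L C.verts)}) :
      ∃ S ⊆ nbrsIn H L C.1.verts, #S = d / 2 + 1 := exists_subset_card_eq (by have := C.2; lia)
  choose S hSN hS using hwide
  have hvM (v : V) : #{i : L | v ∈ ({u ∈ L | G.Adj i u} : Finset V)} ≤ d := by
    by_cases hv : v ∈ L
    · refine le_trans ?_ (le_of_add_le_left (hG v hv))
      exact card_le_card_of_injOn (↑) (fun i hi ↦ by simpa [hv, G.adj_comm] using hi)
        Subtype.val_injective.injOn
    · simp [hv]
  have hvS (v : V) : #{C | v ∈ S C} ≤ d := by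
    by_cases hv : v ∈ L
    · refine le_trans ?_ ((card_filter_mem_nbrsIn_le H L Z v).trans (hZ v hv))
      refine card_le_card_of_injOn (↑) (fun C hC ↦ ?_) Subtype.val_injective.injOn
      simpa using hSN C (by simpa using hC)
    · have hvS (C) : v ∉ S C := fun h ↦ hv (mem_nbrsIn.1 (hSN C h)).1
      simp [hvS]
  obtain ⟨ω, hM, hw, hS'⟩ := exists_marking c hq hd t (γ := L) (u := fun i ↦ t i)
    (M := fun i ↦ {u ∈ L | G.Adj i u}) (fun i ↦ ht i i.2) (fun i ↦ htq i i.2)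
    (fun i ↦ hG i i.2) hvM hN hvN hS hvS
  refine ⟨marking c ω, fun v hv ↦ ?_, hw, fun C hC ↦ ⟨?_, ?_⟩⟩
  · have := hM ⟨v, hv⟩
    rwa [filter_comm] at this
  · by_contra! h
    obtain ⟨v, hv, hvω⟩ := hS' ⟨C, h⟩
    exact Bool.false_ne_true (hvω.symm.trans (hC v (hSN ⟨C, h⟩ hv)))
  · by_contra! h
    obtain ⟨v, hv, hvω⟩ := hc ω C h
    exact Bool.false_ne_true (hvω.symm.trans (hC v (mem_filter.1 hv).1))

end GoodMarking

section Assembly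

open Finset

open scoped Classical

variable {V α : Type*} {H : SimpleGraph V} {A B : Finset V} {q d : ℕ} {v : V}

/-- The amount by which the degree of `v` in `B` falls short of the number `d` of colors. -/
noncomputable def slack (H : SimpleGraph V) (B : Finset V) (d : ℕ) (v : V) : ℕ :=
  d - degIn H B v

/-- The free vertices of `B`, those without neighbors in `A`. -/
noncomputable def freePart (H : SimpleGraph V) (A B : Finset V) : Finset V :=
  {v ∈ B | ∀ a ∈ A, ¬H.Adj v a}

/-- The tight vertices of `B`: those that are not free and have slack at most `(q - 1) ^ 2`. These
are the vertices that receive a random mark. -/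
noncomputable def tightPart (H : SimpleGraph V) (A B : Finset V) (q d : ℕ) : Finset V :=
  {v ∈ B | v ∉ freePart H A B ∧ slack H B d v ≤ (q - 1) ^ 2}

theorem degIn_le_and_degIn_le_mul_slack (hq : 0 < q)
    (h : (degIn H B v : ℤ) + ⌈(degIn H A v : ℚ) / q⌉ ≤ d) :
    degIn H B v ≤ d ∧ degIn H A v ≤ q * slack H B d v := by
  have hceil : 0 ≤ ⌈(degIn H A v : ℚ) / q⌉ := Int.ceil_nonneg (by positivity)
  have hle : ⌈(degIn H A v : ℚ) / q⌉ ≤ (slack H B d v : ℤ) := by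
    unfold slack
    lia
  rw [Int.ceil_le, div_le_iff₀ (by exact_mod_cast hq), mul_comm] at hle
  exact ⟨by lia, by exact_mod_cast hle⟩

theorem mem_freePart : v ∈ freePart H A B ↔ v ∈ B ∧ ∀ a ∈ A, ¬H.Adj v a := mem_filter

theorem freePart_subset : freePart H A B ⊆ B := filter_subset _ _

theorem tightPart_subset : tightPart H A B q d ⊆ B := filter_subset _ _

theorem disjoint_tightPart_freePart : Disjoint (tightPart H A B q d) (freePart H A B) :=
  disjoint_left.2 fun _ hv ↦ (mem_filter.1 hv).2.1

theorem one_le_slack (hvB : v ∈ B) (hv : v ∉ freePart H A B)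
    (hvA : degIn H A v ≤ q * slack H B d v) : 1 ≤ slack H B d v := by
  obtain ⟨a, ha, hva⟩ : ∃ a ∈ A, H.Adj v a := by simpa [mem_freePart, hvB] using hv
  have hpos : 0 < q * slack H B d v := (degIn_pos.2 ⟨a, ha, hva⟩).trans_le hvA
  exact pos_of_mul_pos_right hpos (Nat.zero_le q)

theorem degIn_tightPart_add_le (hv : degIn H B v ≤ d) :
    degIn H (tightPart H A B q d) v + degIn H (freePart H A B) v + slack H B d v ≤ d := by
  have : degIn H (tightPart H A B q d) v + degIn H (freePart H A B) v ≤ degIn H B v :=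
    degIn_add_degIn_le tightPart_subset freePart_subset disjoint_tightPart_freePart
  unfold slack
  lia

theorem exists_adj_notMem_freePart (hH : H.Preconnected) (hA : A.Nonempty) (hAB : Disjoint A B)
    (hcover : ∀ v, v ∈ A ∨ v ∈ B) (C : Piece H (freePart H A B)) :
    ∃ z ∈ C.verts, ∃ u ∈ B, u ∉ freePart H A B ∧ H.Adj z u := by
  obtain ⟨a, ha⟩ := hA
  have haC : a ∉ C.verts := fun h ↦ disjoint_left.1 hAB ha (freePart_subset (C.verts_subset h))
  obtain ⟨z, hz, u, hu, hzu⟩ := exists_adj_of_preconnected hH C.verts_nonempty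
    ((Set.ne_univ_iff_exists_notMem _).2 ⟨a, haC⟩)
  have huA : u ∉ A := fun h ↦ (mem_freePart.1 (C.verts_subset hz)).2 u h hzu
  exact ⟨z, hz, u, (hcover u).resolve_left huA,
    fun h ↦ hu (Piece.mem_verts_of_adj hz h hzu), hzu⟩

theorem exists_adj_or_isCore (hH : H.Preconnected) (hA : A.Nonempty) (hAB : Disjoint A B)
    (hcover : ∀ v, v ∈ A ∨ v ∈ B) {C : Piece H (freePart H A B)} {w : V → Bool} {K : Finset V}
    (hC : (∀ v ∈ nbrsIn H (tightPart H A B q d) C.verts, w v) →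
      (nbrsIn H (tightPart H A B q d) C.verts).Nonempty →
        IsCore (nbrsIn H (tightPart H A B q d) C.verts) (degIn H C.verts) d K) :
    (∃ z ∈ C.verts, ∃ u ∈ B,
        u ∉ ({u ∈ tightPart H A B q d | w u} : Finset V) ∧ u ∉ freePart H A B ∧ H.Adj z u) ∨
      IsCore (nbrsIn H {u ∈ tightPart H A B q d | w u} C.verts) (degIn H C.verts) d K := by
  refine or_iff_not_imp_left.2 fun hno ↦ ?_
  have hmarked {z u : V} (hz : z ∈ C.verts) (huB : u ∈ B) (huZ : u ∉ freePart H A B)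
      (hzu : H.Adj z u) : u ∈ tightPart H A B q d ∧ w u :=
    mem_filter.1 (by_contra fun hu ↦ hno ⟨z, hz, u, huB, hu, huZ, hzu⟩)
  have hall : ∀ v ∈ nbrsIn H (tightPart H A B q d) C.verts, w v := fun v hv ↦ by
    obtain ⟨hvL, z, hz, hvz⟩ := mem_nbrsIn.1 hv
    exact (hmarked hz (tightPart_subset hvL)
      (disjoint_left.1 disjoint_tightPart_freePart hvL) hvz.symm).2
  have heq : nbrsIn H {u ∈ tightPart H A B q d | w u} C.verts =
      nbrsIn H (tightPart H A B q d) C.verts := by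
    rw [← filter_true_of_mem hall]
    simp only [nbrsIn, filter_filter, and_comm]
  rw [heq]
  obtain ⟨z, hz, u, huB, huZ, hzu⟩ := exists_adj_notMem_freePart hH hA hAB hcover C
  exact hC hall ⟨u, mem_nbrsIn.2 ⟨(hmarked hz huB huZ hzu).1, z, hz, hzu.symm⟩⟩

theorem capacity_slack_eq_capacity_false {w : V → Bool} (hvB : v ∈ B) (hvZ : v ∉ freePart H A B)
    (hv : v ∉ ({u ∈ tightPart H A B q d | w u} : Finset V)) :
    capacity q (slack H B d v) (w v) = capacity q (slack H B d v) false := by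
  by_cases hvL : slack H B d v ≤ (q - 1) ^ 2
  · have hw : w v = false := by simpa [tightPart, hvB, hvZ, hvL] using hv
    rw [hw]
  · simp [capacity, hvL]

theorem exists_marking_and_core [Finite V] [Fintype α] (hq : 4 ≤ q)
    (hd : q ^ 3 + 2 * q ^ 2 ≤ d + q + 8) (hB : ∀ v ∈ B, degIn H B v ≤ d)
    (hBA : ∀ v ∈ B, degIn H A v ≤ q * slack H B d v) {N : α → Finset V} (hN : ∀ a, #(N a) = d)
    (hvN : ∀ v, #{a | v ∈ N a} ≤ q * slack H B d v) :
    ∃ (w : V → Bool) (K : Piece H (freePart H A B) → Finset V),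
      (∀ v ∈ tightPart H A B q d,
        degIn (H ⊔ cliqueUnion K) {u ∈ tightPart H A B q d | w u} v +
          (q - 1) * capacity q (slack H B d v) true < d) ∧
      (∀ a, 6 * q ^ 3 ≤ ∑ v ∈ N a, weight q (slack H B d v) (w v)) ∧
      ∀ C, (∀ v ∈ nbrsIn H (tightPart H A B q d) C.verts, w v) →
        (nbrsIn H (tightPart H A B q d) C.verts).Nonempty →
          IsCore (nbrsIn H (tightPart H A B q d) C.verts) (degIn H C.verts) d (K C) := by
  have hslack : ∀ v ∈ tightPart H A B q d, 1 ≤ slack H B d v := fun v hv ↦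
    one_le_slack (tightPart_subset hv) (mem_filter.1 hv).2.1 (hBA v (tightPart_subset hv))
  have hdeg : ∀ v ∈ tightPart H A B q d,
      degIn H (tightPart H A B q d) v + degIn H (freePart H A B) v + slack H B d v ≤ d :=
    fun v hv ↦ degIn_tightPart_add_le (hB v (tightPart_subset hv))
  obtain ⟨K, hK, hcore⟩ := exists_forall_isCore (H := H) (Z := freePart H A B)
    fun v hv ↦ show degIn H (freePart H A B) v < d by
      have := hdeg v hv
      have := hslack v hv
      lia
  obtain ⟨w, hw, hweight, hpiece⟩ := exists_good_marking (H := H) (Z := freePart H A B)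
    (G := H ⊔ cliqueUnion K) hq hd hslack (fun v hv ↦ (mem_filter.1 hv).2.2)
    (fun v hv ↦ (Nat.add_le_add_right
      (degIn_sup_cliqueUnion_pieces_le fun C ↦ hK C v) _).trans (hdeg v hv))
    (fun v hv ↦ by have := hdeg v hv; lia) hN hvN
  exact ⟨w, K, hw, hweight, fun C hC hne ↦ hcore C hne (hpiece C hC).2 (hpiece C hC).1⟩

theorem exists_properOn_of_marking [Fintype α] (hd : 0 < d) (hH : H.Preconnected)
    (hA : A.Nonempty) (hAB : Disjoint A B) (hcover : ∀ v, v ∈ A ∨ v ∈ B)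
    (hB : ∀ v ∈ B, degIn H B v ≤ d) (hBA : ∀ v ∈ B, degIn H A v ≤ q * slack H B d v)
    {w : V → Bool} {K : Piece H (freePart H A B) → Finset V}
    (hw : ∀ v ∈ tightPart H A B q d,
      degIn (H ⊔ cliqueUnion K) {u ∈ tightPart H A B q d | w u} v +
        (q - 1) * capacity q (slack H B d v) true < d)
    (hK : ∀ C, (∀ v ∈ nbrsIn H (tightPart H A B q d) C.verts, w v) →
      (nbrsIn H (tightPart H A B q d) C.verts).Nonempty →
        IsCore (nbrsIn H (tightPart H A B q d) C.verts) (degIn H C.verts) d (K C))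
    {Q : α → Finset V} (hQ : ∀ a, #(Q a) = q) (hQZ : ∀ a, Disjoint (Q a) (freePart H A B))
    (hvQ : ∀ v, #{a | v ∈ Q a} ≤ capacity q (slack H B d v) (w v)) :
    ∃ f : V → Fin d, ProperOn (H ⊔ cliqueUnion Q) B f := by
  refine exists_properOn_sup_cliqueUnion (K := K) hd ((filter_subset _ _).trans tightPart_subset)
    freePart_subset (disjoint_of_subset_left (filter_subset _ _) disjoint_tightPart_freePart) hQZ
    (fun v hv ↦ ?_) (fun v hv ↦ hB v (freePart_subset hv))
    (fun C ↦ exists_adj_or_isCore hH hA hAB hcover (hK C)) (fun v hvB hvW hvZ ↦ ?_)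
  · obtain ⟨hvL, hvw⟩ := mem_filter.1 hv
    exact (degIn_sup_cliqueUnion_le_mul hQ (hvw ▸ hvQ v)).trans_lt (hw v hvL)
  · have hcap := capacity_slack_eq_capacity_false hvB hvZ hvW ▸ hvQ v
    have hlt := capacity_false_mul_lt q (one_le_slack hvB hvZ (hBA v hvB))
    refine (degIn_sup_cliqueUnion_le_mul hQ hcap).trans_lt ?_
    have := hB v hvB
    unfold slack at hlt ⊢
    lia

theorem exists_properOn_and_injOn [Finite V] (hq : 4 ≤ q) (hd : q ^ 3 + 2 * q ^ 2 ≤ d + q + 8)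
    (hH : H.Preconnected) (hA : A.Nonempty) (hAB : Disjoint A B) (hcover : ∀ v, v ∈ A ∨ v ∈ B)
    (hAd : ∀ a ∈ A, d ≤ degIn H B a) (hB : ∀ v ∈ B, degIn H B v ≤ d)
    (hBA : ∀ v ∈ B, degIn H A v ≤ q * slack H B d v) :
    ∃ f : V → Fin d, ProperOn H B f ∧
      ∀ a ∈ A, ∃ Q ⊆ ({u ∈ B | H.Adj a u} : Finset V), #Q = q ∧ Set.InjOn f Q := by
  choose N hNsub hN using fun a : A ↦ exists_subset_card_eq (hAd a a.2)
  have hvN (v : V) : #{a | v ∈ N a} ≤ q * slack H B d v := by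
    by_cases hv : v ∈ B
    · refine le_trans ?_ (hBA v hv)
      refine card_le_card_of_injOn (↑) (fun a ha ↦ ?_) Subtype.val_injective.injOn
      exact mem_filter.2 ⟨a.2, (mem_filter.1 (hNsub a (mem_filter.1 ha).2)).2.symm⟩
    · have hvN (a) : v ∉ N a := fun h ↦ hv (mem_filter.1 (hNsub a h)).1
      simp [hvN]
  obtain ⟨w, K, hw, hweight, hK⟩ := exists_marking_and_core hq hd hB hBA hN hvN
  obtain ⟨Q, hQ, hQN, hvQ⟩ := exists_selection_of_weight (by lia) hweight hvN
  have hQZ (a) : Disjoint (Q a) (freePart H A B) := disjoint_left.2 fun v hvQ hvZ ↦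
    (mem_freePart.1 hvZ).2 a a.2 (mem_filter.1 (hNsub a (hQN a hvQ))).2.symm
  obtain ⟨f, hf⟩ := exists_properOn_of_marking (by nlinarith) hH hA hAB hcover hB hBA hw hK hQ
    hQZ hvQ
  refine ⟨f, hf.of_le le_sup_left, fun a ha ↦ ⟨Q ⟨a, ha⟩, (hQN _).trans (hNsub _), hQ _, ?_⟩⟩
  exact (hf.of_le le_sup_right).injOn_of_cliqueUnion
    ((hQN _).trans ((hNsub _).trans (filter_subset _ _)))

end Assembly

theorem lemma_one_general {V : Type*} [Fintype V] [DecidableEq V]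
    (H : SimpleGraph V) [DecidableRel H.Adj]
    (q d : ℕ) (hq : 4 ≤ q) (hd : (q : ℤ) ^ 3 + 2 * q ^ 2 - q - 8 ≤ d)
    (A B : Finset V) (hdisj : Disjoint A B) (hcover : A ∪ B = Finset.univ)
    (hA : A.Nonempty) (hconn : H.Connected)
    (hAindep : ∀ a ∈ A, ∀ b ∈ A, ¬ H.Adj a b)
    (hAdeg : ∀ a ∈ A, d ≤ H.degree a)
    (hBdeg : ∀ v ∈ B, ((H.neighborFinset v ∩ B).card : ℤ) +
        ⌈((H.neighborFinset v ∩ A).card : ℚ) / (q : ℚ)⌉ ≤ (d : ℤ)) :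
    ∃ f : V → Fin d,
      (∀ x ∈ B, ∀ y ∈ B, H.Adj x y → f x ≠ f y) ∧
      (∀ a ∈ A, q ≤ ((H.neighborFinset a ∩ B).image f).card) := by
  have hmem (v : V) : v ∈ A ∨ v ∈ B := Finset.mem_union.1 (hcover ▸ Finset.mem_univ v)
  have hd' : q ^ 3 + 2 * q ^ 2 ≤ d + q + 8 := by zify; linarith
  have hAd : ∀ a ∈ A, d ≤ degIn H B a := fun a ha ↦ by
    have hsub : H.neighborFinset a ⊆ B := fun u hu ↦ (hmem u).resolve_left fun huA ↦
      hAindep a ha u huA ((H.mem_neighborFinset a u).1 hu)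
    rw [← card_neighborFinset_inter, Finset.inter_eq_left.2 hsub, H.card_neighborFinset_eq_degree]
    exact hAdeg a ha
  have hB : ∀ v ∈ B, degIn H B v ≤ d ∧ degIn H A v ≤ q * slack H B d v := fun v hv ↦
    degIn_le_and_degIn_le_mul_slack (by lia)
      (by simpa only [card_neighborFinset_inter] using hBdeg v hv)
  obtain ⟨f, hf, hfA⟩ := exists_properOn_and_injOn hq hd' hconn.preconnected hA hdisj hmem hAd
    (fun v hv ↦ (hB v hv).1) (fun v hv ↦ (hB v hv).2)
  refine ⟨f, hf, fun a ha ↦ ?_⟩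
  obtain ⟨Q, hQ, hQcard, hQf⟩ := hfA a ha
  rw [← hQcard, ← Finset.card_image_of_injOn hQf]
  exact Finset.card_le_card (Finset.image_subset_image fun u hu ↦ by
    simpa [and_comm] using hQ hu)

/-- **Lemma 1.** Let `q ≥ 4` and `d = q³ + 2q² − q − 8`. Let `A` and `B` be
nonempty disjoint sets and `H` a connected simple graph on `A ∪ B`. Assume no two vertices of
`A` are adjacent, every vertex of `A` has degree at least `d` in `H`, and every `v ∈ B`
satisfies `deg_{H[B]}(v) + ⌈d_A(v)/q⌉ ≤ d`. Then the induced subgraph `H[B]` admits a proper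
`d`-coloring such that every vertex of `A` has at least `q` distinct colors among its
neighbors in `B`. -/
theorem lemma_one {V : Type*} [Fintype V] [DecidableEq V]
    (H : SimpleGraph V) [DecidableRel H.Adj]
    (q d : ℕ) (hq : 4 ≤ q) (hd : (d : ℤ) = q ^ 3 + 2 * q ^ 2 - q - 8)
    (A B : Finset V) (hdisj : Disjoint A B) (hcover : A ∪ B = Finset.univ)
    (hA : A.Nonempty) (hB : B.Nonempty) (hconn : H.Connected)
    (hAindep : ∀ a ∈ A, ∀ b ∈ A, ¬ H.Adj a b)
    (hAdeg : ∀ a ∈ A, d ≤ H.degree a)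
    (hBdeg : ∀ v ∈ B, ((H.neighborFinset v ∩ B).card : ℤ) +
        ⌈((H.neighborFinset v ∩ A).card : ℚ) / (q : ℚ)⌉ ≤ (d : ℤ)) :
    ∃ f : V → Fin d,
      (∀ x ∈ B, ∀ y ∈ B, H.Adj x y → f x ≠ f y) ∧
      (∀ a ∈ A, q ≤ ((H.neighborFinset a ∩ B).image f).card) :=
  lemma_one_general H q d hq hd.ge A B hdisj hcover hA hconn hAindep hAdeg hBdeg
end

section
/- Let G be a finite simple graph with maximum degree at most D that contains no clique on D+1 vertices, and let D = α_1 + ... + α_{c+1} where each α_i ≥ 2 is an integer. Then every coloring ξ ∈ Ω contains no large clique; equivalently, there exists a Φ-minimizing coloring of V(G) with colors {1,…,c+1} having no large clique, and every Φ-minimizing coloring with the fewest large cliques has zero large cliques. -/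
/-!
Let `K` be a large clique of color `a` of a coloring `ξ ∈ Ω`, and let `x ∈ K`. Since `x` has at
least `α a` neighbors of color `a` and at most `∑ i, α i` neighbors in all, minimality of `Φ`
forces it to have exactly `α b` neighbors of every color `b`. Recoloring `x` with `b` therefore
keeps `Φ`, and as it destroys `K` it must create a new large clique, made of `x` and its neighbors
of color `b`.

Recoloring in this way again and again between two colors `a` and `b`, never moving the vertex that
has just arrived, is a walk that could never come back if no vertex of color `b` had two neighbors
in `K`. So, the graph being finite, some vertex has, and then all vertices of `K` have the same
neighbors of color `b`. Applied to `ξ` and its recolorings, this makes the closed neighborhood of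
`x` a clique on `∑ i, α i + 1` vertices.
-/

open scoped Classical

/-- The number of edges of `G` both of whose endpoints have color `i` under `ξ`. -/
noncomputable def monoEdges {V : Type*} [Fintype V] [DecidableEq V] (G : SimpleGraph V)
    [DecidableRel G.Adj] {k : ℕ} (ξ : V → Fin k) (i : Fin k) : ℕ :=
  (G.edgeFinset.filter fun e => ∀ v ∈ e, ξ v = i).card

/-- `Φ(ξ) = Σ_i f_i(ξ)/α_i` as a rational number. -/
noncomputable def Phi {V : Type*} [Fintype V] [DecidableEq V] (G : SimpleGraph V)
    [DecidableRel G.Adj] {k : ℕ} (α : Fin k → ℕ) (ξ : V → Fin k) : ℚ :=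
  ∑ i, (monoEdges G ξ i : ℚ) / (α i : ℚ)

/-- A *large clique* of the coloring `ξ`: a set of `α_i + 1` pairwise adjacent vertices all of
color `i`, for some color `i`. -/
def IsLargeClique {V : Type*} (G : SimpleGraph V) {k : ℕ} (α : Fin k → ℕ)
    (ξ : V → Fin k) (s : Finset V) : Prop :=
  ∃ i : Fin k, G.IsNClique (α i + 1) s ∧ ∀ v ∈ s, ξ v = i

/-- `φ(ξ)`: the number of large cliques of the coloring `ξ`. -/
noncomputable def numLargeCliques {V : Type*} (G : SimpleGraph V) {k : ℕ}
    (α : Fin k → ℕ) (ξ : V → Fin k) : ℕ :=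
  Set.ncard {s : Finset V | IsLargeClique G α ξ s}

section LargeCliques

open Finset Function

section ColorNbrs

variable {V κ : Type*} [DecidableEq κ] {G : SimpleGraph V} {ξ : V → κ} {x v : V} {b : κ}
  [Fintype (G.neighborSet x)]

/-- The neighbors of `x` in `G` that have color `b` under `ξ`. -/
def colorNbrs (G : SimpleGraph V) (ξ : V → κ) (x : V) [Fintype (G.neighborSet x)] (b : κ) :
    Finset V :=
  {v ∈ G.neighborFinset x | ξ v = b}

lemma mem_colorNbrs : v ∈ colorNbrs G ξ x b ↔ G.Adj x v ∧ ξ v = b := by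
  simp [colorNbrs]

lemma self_notMem_colorNbrs : x ∉ colorNbrs G ξ x b :=
  fun hx => G.irrefl (mem_colorNbrs.mp hx).1

lemma sum_card_colorNbrs [Fintype κ] : ∑ b, #(colorNbrs G ξ x b) = G.degree x :=
  (card_eq_sum_card_fiberwise fun _ _ => mem_coe.mpr (mem_univ _)).symm

lemma colorNbrs_update [DecidableEq V] (c : κ) :
    colorNbrs G (update ξ x c) x b = colorNbrs G ξ x b :=
  filter_congr fun v hv => by rw [update_of_ne (((G.mem_neighborFinset x v).mp hv).ne')]

end ColorNbrs

variable {V : Type*} [Fintype V] [DecidableEq V] {G : SimpleGraph V} [DecidableRel G.Adj]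
  {k : ℕ} {α : Fin k → ℕ} {ξ : V → Fin k}

lemma card_monoEdges_incident (x : V) (i : Fin k) :
    #{e ∈ G.edgeFinset | (∀ v ∈ e, ξ v = i) ∧ x ∈ e} =
      if ξ x = i then #(colorNbrs G ξ x i) else 0 := by
  split_ifs with hx
  · symm
    refine card_bij (fun v _ => s(x, v)) (fun v hv => ?_) (fun v _ w _ => Sym2.congr_right.mp) ?_
    · obtain ⟨hxv, hv⟩ := mem_colorNbrs.mp hv
      simp [hxv, hv, hx]
    · intro e he
      simp only [mem_filter, SimpleGraph.mem_edgeFinset] at he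
      obtain ⟨hedge, hcolor, hxe⟩ := he
      obtain ⟨v, rfl⟩ := Sym2.mem_iff_exists.mp hxe
      exact ⟨v, mem_colorNbrs.mpr ⟨hedge, hcolor v (Sym2.mem_mk_right x v)⟩, rfl⟩
  · rw [card_eq_zero, filter_eq_empty_iff]
    exact fun e _ he => hx (he.1 x he.2)

lemma filter_monoEdges_notMem_update (x : V) (b i : Fin k) :
    {e ∈ G.edgeFinset | (∀ v ∈ e, update ξ x b v = i) ∧ x ∉ e} =
      {e ∈ G.edgeFinset | (∀ v ∈ e, ξ v = i) ∧ x ∉ e} :=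
  filter_congr fun _ _ => and_congr_left fun hx => forall₂_congr fun _ hv => by
    rw [update_of_ne (ne_of_mem_of_not_mem hv hx)]

lemma monoEdges_eq_add (ξ : V → Fin k) (x : V) (i : Fin k) :
    monoEdges G ξ i = (if ξ x = i then #(colorNbrs G ξ x i) else 0) +
      #{e ∈ G.edgeFinset | (∀ v ∈ e, ξ v = i) ∧ x ∉ e} := by
  rw [← card_monoEdges_incident, ← filter_filter, ← filter_filter,
    card_filter_add_card_filter_not, monoEdges]

lemma monoEdges_update_add (ξ : V → Fin k) (x : V) (b i : Fin k) :
    monoEdges G (update ξ x b) i + (if ξ x = i then #(colorNbrs G ξ x i) else 0) =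
      monoEdges G ξ i + if b = i then #(colorNbrs G ξ x i) else 0 := by
  rw [monoEdges_eq_add (update ξ x b) x, monoEdges_eq_add ξ x, filter_monoEdges_notMem_update,
    colorNbrs_update, update_self]
  ring

lemma Phi_update_add (G : SimpleGraph V) [DecidableRel G.Adj] (α : Fin k → ℕ) (ξ : V → Fin k)
    (x : V) (b : Fin k) :
    Phi G α (update ξ x b) + (#(colorNbrs G ξ x (ξ x)) : ℚ) / α (ξ x) =
      Phi G α ξ + (#(colorNbrs G ξ x b) : ℚ) / α b := by
  have hedges (i : Fin k) : (monoEdges G (update ξ x b) i : ℚ) / α i +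
        (if ξ x = i then (#(colorNbrs G ξ x i) : ℚ) / α i else 0) =
      (monoEdges G ξ i : ℚ) / α i + if b = i then (#(colorNbrs G ξ x i) : ℚ) / α i else 0 := by
    have h := congrArg (fun n : ℕ => (n : ℚ) / α i) (monoEdges_update_add (G := G) ξ x b i)
    simpa only [Nat.cast_add, Nat.cast_ite, Nat.cast_zero, add_div, ite_div, zero_div] using h
  simpa only [Phi, sum_add_distrib, sum_ite_eq, mem_univ, if_true] using
    sum_congr (s₁ := univ) rfl fun i _ => hedges i

/-- `ξ` minimizes `Φ` among all colorings. -/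
def IsPhiMinimizing (G : SimpleGraph V) [DecidableRel G.Adj] (α : Fin k → ℕ) (ξ : V → Fin k) :
    Prop :=
  ∀ ψ : V → Fin k, Phi G α ξ ≤ Phi G α ψ

lemma IsPhiMinimizing.card_colorNbrs_div_le (hξ : IsPhiMinimizing G α ξ) (x : V) (b : Fin k) :
    (#(colorNbrs G ξ x (ξ x)) : ℚ) / α (ξ x) ≤ (#(colorNbrs G ξ x b) : ℚ) / α b := by
  linarith [hξ (update ξ x b), Phi_update_add G α ξ x b]

lemma IsPhiMinimizing.card_colorNbrs (hξ : IsPhiMinimizing G α ξ) (hα : ∀ i, 0 < α i) {x : V}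
    (hdeg : G.degree x ≤ ∑ i, α i) (hx : α (ξ x) ≤ #(colorNbrs G ξ x (ξ x))) (b : Fin k) :
    #(colorNbrs G ξ x b) = α b := by
  have hle (i : Fin k) : α i ≤ #(colorNbrs G ξ x i) := by
    have hone : (1 : ℚ) ≤ #(colorNbrs G ξ x (ξ x)) / α (ξ x) :=
      (one_le_div (by exact_mod_cast hα _)).mpr (by exact_mod_cast hx)
    exact_mod_cast (one_le_div (by exact_mod_cast hα i)).mp
      (hone.trans (hξ.card_colorNbrs_div_le x i))
  have hsum : ∑ i, α i = ∑ i, #(colorNbrs G ξ x i) :=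
    (sum_le_sum fun i _ => hle i).antisymm (sum_card_colorNbrs.trans_le hdeg)
  exact ((sum_eq_sum_iff_of_le fun i _ => hle i).mp hsum b (mem_univ b)).symm

/-- The set `Ω` of the colorings that minimize `Φ` and, among the `Φ`-minimizing colorings, have
the fewest large cliques. -/
def Omega (G : SimpleGraph V) [DecidableRel G.Adj] (α : Fin k → ℕ) : Set (V → Fin k) :=
  {ξ | IsPhiMinimizing G α ξ ∧
    ∀ ψ, IsPhiMinimizing G α ψ → numLargeCliques G α ξ ≤ numLargeCliques G α ψ}

lemma Omega_nonempty [Nonempty (V → Fin k)] (G : SimpleGraph V) [DecidableRel G.Adj]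
    (α : Fin k → ℕ) : (Omega G α).Nonempty :=
  Set.exists_min_image {ξ | IsPhiMinimizing G α ξ} (numLargeCliques G α) (Set.toFinite _)
    (Finite.exists_min (Phi G α))

lemma IsLargeClique.of_update {s K : Finset V} {x : V} {b : Fin k}
    (hs : IsLargeClique G α (update ξ x b) s) (hx : x ∈ K) (hb : #(colorNbrs G ξ x b) = α b)
    (hne : s ≠ insert x (colorNbrs G ξ x b)) : IsLargeClique G α ξ s ∧ s ≠ K := by
  obtain ⟨i, hclique, hcolor⟩ := hs
  have hxs : x ∉ s := by
    intro hxs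
    obtain rfl : b = i := by rw [← hcolor x hxs, update_self]
    refine hne (eq_of_subset_of_card_le (fun v hv => ?_) ?_)
    · rw [mem_insert, or_iff_not_imp_left]
      intro hvx
      rw [mem_colorNbrs, ← hcolor v hv, update_of_ne hvx]
      exact ⟨hclique.isClique hxs hv (Ne.symm hvx), rfl⟩
    · rw [card_insert_of_notMem self_notMem_colorNbrs, hb, hclique.card_eq]
  refine ⟨⟨i, hclique, fun v hv => ?_⟩, (ne_of_mem_of_not_mem' hx hxs).symm⟩
  rw [← hcolor v hv, update_of_ne (ne_of_mem_of_not_mem hv hxs)]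

/-- No vertex of color `b` has two neighbors in `K`. For a large clique of a coloring in `Ω` this is
the alternative to all vertices of `K` having the same neighbors of color `b`. -/
def NoCommonNbr (G : SimpleGraph V) (ξ : V → Fin k) (b : Fin k) (K : Finset V) : Prop :=
  ∀ v, ξ v = b → ∀ u ∈ K, ∀ w ∈ K, G.Adj u v → G.Adj w v → u = w

/-- `K` is a large clique of color `a` of the coloring `ξ ∈ Ω`. -/
structure OmegaClique (G : SimpleGraph V) [DecidableRel G.Adj] (α : Fin k → ℕ) (ξ : V → Fin k)
    (a : Fin k) (K : Finset V) : Prop where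
  mem_Omega : ξ ∈ Omega G α
  isNClique : G.IsNClique (α a + 1) K
  color : ∀ v ∈ K, ξ v = a

namespace OmegaClique

variable {a b : Fin k} {K : Finset V} {u v w x y z : V}

lemma adj (hK : OmegaClique G α ξ a K) (hu : u ∈ K) (hv : v ∈ K) (huv : u ≠ v) : G.Adj u v :=
  hK.isNClique.isClique hu hv huv

lemma exists_ne_ne (hK : OmegaClique G α ξ a K) (ha : 2 ≤ α a) (u v : V) :
    ∃ w ∈ K, w ≠ u ∧ w ≠ v := by
  have hcard : #{u, v} < #K := by
    rw [hK.isNClique.card_eq]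
    exact card_le_two.trans_lt (Nat.lt_succ_of_le ha)
  obtain ⟨w, hw, hne⟩ := exists_mem_notMem_of_card_lt_card hcard
  exact ⟨w, hw, by simpa only [mem_insert, mem_singleton, not_or] using hne⟩

lemma erase_subset_colorNbrs (hK : OmegaClique G α ξ a K) (hx : x ∈ K) :
    K.erase x ⊆ colorNbrs G ξ x a := fun v hv =>
  mem_colorNbrs.mpr
    ⟨hK.adj hx (mem_of_mem_erase hv) (ne_of_mem_erase hv).symm, hK.color v (mem_of_mem_erase hv)⟩

lemma card_erase (hK : OmegaClique G α ξ a K) (hx : x ∈ K) : #(K.erase x) = α a := by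
  rw [card_erase_of_mem hx, hK.isNClique.card_eq, Nat.add_sub_cancel]

lemma card_colorNbrs (hK : OmegaClique G α ξ a K) (hα : ∀ i, 0 < α i)
    (hdeg : G.degree x ≤ ∑ i, α i) (hx : x ∈ K) (b : Fin k) : #(colorNbrs G ξ x b) = α b := by
  refine hK.mem_Omega.1.card_colorNbrs hα hdeg ?_ b
  rw [hK.color x hx, ← hK.card_erase hx]
  exact card_le_card (hK.erase_subset_colorNbrs hx)

lemma mem_of_adj (hK : OmegaClique G α ξ a K) (hα : ∀ i, 0 < α i)
    (hdeg : G.degree x ≤ ∑ i, α i) (hx : x ∈ K) (hxv : G.Adj x v) (hv : ξ v = a) : v ∈ K := by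
  have heq : K.erase x = colorNbrs G ξ x a :=
    eq_of_subset_of_card_le (hK.erase_subset_colorNbrs hx)
      (by rw [hK.card_colorNbrs hα hdeg hx, hK.card_erase hx])
  exact mem_of_mem_erase (heq ▸ mem_colorNbrs.mpr ⟨hxv, hv⟩)

lemma Phi_update (hK : OmegaClique G α ξ a K) (hα : ∀ i, 0 < α i)
    (hdeg : G.degree x ≤ ∑ i, α i) (hx : x ∈ K) (b : Fin k) :
    Phi G α (update ξ x b) = Phi G α ξ := by
  have hα₀ (i : Fin k) : (α i : ℚ) ≠ 0 := Nat.cast_ne_zero.mpr (hα i).ne'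
  have h := Phi_update_add G α ξ x b
  rw [hK.card_colorNbrs hα hdeg hx, hK.card_colorNbrs hα hdeg hx, div_self (hα₀ _),
    div_self (hα₀ _)] at h
  exact add_right_cancel h

lemma ncard_largeCliques_update_sdiff_lt (hK : OmegaClique G α ξ a K)
    (hx : x ∈ K) (hb : #(colorNbrs G ξ x b) = α b) :
    ({s | IsLargeClique G α (update ξ x b) s} \ {insert x (colorNbrs G ξ x b)}).ncard <
      numLargeCliques G α ξ :=
  calc
    _ ≤ ({s | IsLargeClique G α ξ s} \ {K}).ncard :=
      Set.ncard_le_ncard (fun _ hs => hs.1.of_update hx hb hs.2) (Set.toFinite _)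
    _ < _ := Set.ncard_sdiff_singleton_lt_of_mem ⟨a, hK.isNClique, hK.color⟩ (Set.toFinite _)

lemma update_mem_Omega (hK : OmegaClique G α ξ a K) (hα : ∀ i, 0 < α i)
    (hdeg : G.degree x ≤ ∑ i, α i) (hx : x ∈ K) (b : Fin k) : update ξ x b ∈ Omega G α := by
  refine ⟨fun ψ => hK.Phi_update hα hdeg hx b ▸ hK.mem_Omega.1 ψ,
    fun ψ hψ => le_trans ?_ (hK.mem_Omega.2 ψ hψ)⟩
  exact (tsub_le_iff_right.mp (Set.pred_ncard_le_ncard_sdiff_singleton _ _)).trans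
    (hK.ncard_largeCliques_update_sdiff_lt hx (hK.card_colorNbrs hα hdeg hx b))

lemma isLargeClique_update (hK : OmegaClique G α ξ a K) (hα : ∀ i, 0 < α i)
    (hdeg : G.degree x ≤ ∑ i, α i) (hx : x ∈ K) (b : Fin k) :
    IsLargeClique G α (update ξ x b) (insert x (colorNbrs G ξ x b)) := by
  by_contra hnot
  have hlt := hK.ncard_largeCliques_update_sdiff_lt hx (hK.card_colorNbrs hα hdeg hx b)
  rw [Set.sdiff_singleton_eq_self (s := {s | IsLargeClique G α (update ξ x b) s}) hnot] at hlt
  exact hlt.not_ge (hK.mem_Omega.2 _ (hK.update_mem_Omega hα hdeg hx b).1)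

lemma recolor (hK : OmegaClique G α ξ a K) (hα : ∀ i, 0 < α i)
    (hdeg : G.degree x ≤ ∑ i, α i) (hx : x ∈ K) (b : Fin k) :
    OmegaClique G α (update ξ x b) b (insert x (colorNbrs G ξ x b)) := by
  obtain ⟨i, hclique, hcolor⟩ := hK.isLargeClique_update hα hdeg hx b
  obtain rfl : b = i := by rw [← hcolor x (mem_insert_self _ _), update_self]
  exact ⟨hK.update_mem_Omega hα hdeg hx b, hclique, hcolor⟩

lemma adj_of_color_eq (hK : OmegaClique G α ξ a K) (hα : ∀ i, 0 < α i)
    (hdeg : G.degree x ≤ ∑ i, α i) (hx : x ∈ K) (hxu : G.Adj x u) (hxv : G.Adj x v)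
    (hcolor : ξ u = ξ v) (huv : u ≠ v) : G.Adj u v :=
  (hK.recolor hα hdeg hx (ξ v)).adj (mem_insert_of_mem (mem_colorNbrs.mpr ⟨hxu, hcolor⟩))
    (mem_insert_of_mem (mem_colorNbrs.mpr ⟨hxv, rfl⟩)) huv

lemma adj_trans_of_color_eq (hK : OmegaClique G α ξ a K) (hα : ∀ i, 0 < α i)
    (hdeg : ∀ v, G.degree v ≤ ∑ i, α i) (hx : x ∈ K) (hxu : G.Adj x u) (huv : G.Adj u v)
    (hcolor : ξ u = ξ v) (hvx : v ≠ x) : G.Adj x v := by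
  have hv := (hK.recolor hα (hdeg x) hx (ξ v)).mem_of_adj hα (hdeg u)
    (mem_insert_of_mem (mem_colorNbrs.mpr ⟨hxu, hcolor⟩)) huv (update_of_ne hvx _ _)
  exact (mem_colorNbrs.mp (mem_of_mem_insert_of_ne hv hvx)).1

lemma ne_of_color (hK : OmegaClique G α ξ a K) (hx : x ∈ K) (hv : ξ v ≠ a) : v ≠ x :=
  fun h => hv (h ▸ hK.color x hx)

lemma adj_of_adj_of_adj (hK : OmegaClique G α ξ a K) (hα : ∀ i, 0 < α i)
    (hdeg : ∀ v, G.degree v ≤ ∑ i, α i) (hv : ξ v ≠ a) (hu : u ∈ K) (hw : w ∈ K) (huw : u ≠ w)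
    (huv : G.Adj u v) (hwv : G.Adj w v) (hz : z ∈ K) : G.Adj z v := by
  obtain rfl | hzu := eq_or_ne z u
  · exact huv
  obtain rfl | hzw := eq_or_ne z w
  · exact hwv
  have hvN : v ∈ insert u (colorNbrs G ξ u (ξ v)) :=
    mem_insert_of_mem (mem_colorNbrs.mpr ⟨huv, rfl⟩)
  refine ((hK.recolor hα (hdeg u) hu (ξ v)).adj_trans_of_color_eq hα hdeg hvN hwv.symm
    (hK.adj hw hz hzw.symm) ?_ (hK.ne_of_color hz hv).symm).symm
  rw [update_of_ne huw.symm, update_of_ne hzu, hK.color w hw, hK.color z hz]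

lemma adj_of_not_noCommonNbr (hK : OmegaClique G α ξ a K) (hα : ∀ i, 0 < α i)
    (hdeg : ∀ v, G.degree v ≤ ∑ i, α i) (hcommon : ¬ NoCommonNbr G ξ b K) (hab : b ≠ a)
    (hy : y ∈ K) (hz : z ∈ K) (hv : ξ v = b) (hyv : G.Adj y v) : G.Adj z v := by
  simp only [NoCommonNbr, not_forall] at hcommon
  obtain ⟨t, ht, u, hu, w, hw, hut, hwt, huw⟩ := hcommon
  have hall {q : V} (hq : q ∈ K) : G.Adj q t :=
    hK.adj_of_adj_of_adj hα hdeg (ht ▸ hab) hu hw huw hut hwt hq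
  obtain rfl | htv := eq_or_ne t v
  · exact hall hz
  have hcolor : ξ t = ξ v := ht.trans hv.symm
  exact hK.adj_trans_of_color_eq hα hdeg hz (hall hz)
    (hK.adj_of_color_eq hα (hdeg y) hy (hall hy) hyv hcolor htv) hcolor
    (hK.ne_of_color hz (hv ▸ hab))

lemma noCommonNbr_recolor (hK : OmegaClique G α ξ a K) (hα : ∀ i, 0 < α i)
    (hdeg : ∀ v, G.degree v ≤ ∑ i, α i) (hcommon : NoCommonNbr G ξ b K) (hab : b ≠ a)
    (hx : x ∈ K) : NoCommonNbr G (update ξ x b) a (insert x (colorNbrs G ξ x b)) := by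
  by_contra hnot
  obtain ⟨r, hr⟩ : (K.erase x).Nonempty := card_pos.mp (hK.card_erase hx ▸ hα a)
  obtain ⟨y, hy⟩ : (colorNbrs G ξ x b).Nonempty :=
    card_pos.mp (hK.card_colorNbrs hα (hdeg x) hx b ▸ hα b)
  obtain ⟨hrx, hrK⟩ := mem_erase.mp hr
  obtain ⟨hxy, hyb⟩ := mem_colorNbrs.mp hy
  have hyr : G.Adj y r := (hK.recolor hα (hdeg x) hx b).adj_of_not_noCommonNbr hα hdeg hnot
    hab.symm (mem_insert_self _ _) (mem_insert_of_mem hy)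
    (by rw [update_of_ne hrx, hK.color r hrK]) (hK.adj hx hrK hrx.symm)
  exact hrx (hcommon y hyb r hrK x hx hyr.symm hxy)

end OmegaClique

/-- A state of the walk that recolors one vertex of the current large clique `K` after another,
alternately from `a` to `b` and from `b` to `a`. The vertex `p` is the one recolored last (any
vertex of `K` at the start), and `U` consists of the vertices of the cliques left behind, without
the vertices recolored in them. The field `separated` prevents `K` from meeting `U` again. -/
structure RecoloringWalk (G : SimpleGraph V) [DecidableRel G.Adj] (α : Fin k → ℕ) (ξ : V → Fin k)
    (a b : Fin k) (K U : Finset V) (p : V) : Prop extends OmegaClique G α ξ a K where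
  color_ne : b ≠ a
  noCommonNbr : NoCommonNbr G ξ b K
  last_mem : p ∈ K
  disjoint : Disjoint K U
  separated : ∀ u ∈ U, ∀ v ∉ U, v ≠ p → ξ v = a ∨ ξ v = b → G.Adj u v →
    ∃ w ∈ U, ξ w = ξ u ∧ G.Adj u w ∧ ¬ G.Adj v w

namespace RecoloringWalk

variable {a b : Fin k} {K U : Finset V} {p x : V}

lemma notMem (h : RecoloringWalk G α ξ a b K U p) (hx : x ∈ K) : x ∉ U :=
  disjoint_left.mp h.disjoint hx

lemma disjoint_recolor (h : RecoloringWalk G α ξ a b K U p) (hα : ∀ i, 0 < α i)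
    (hdeg : ∀ v, G.degree v ≤ ∑ i, α i) (hx : x ∈ K) (hxp : x ≠ p) :
    Disjoint (insert x (colorNbrs G ξ x b)) (U ∪ K.erase x) := by
  refine disjoint_insert_left.mpr ⟨by simp [h.notMem hx], disjoint_left.mpr fun y hy => ?_⟩
  obtain ⟨hxy, hyb⟩ := mem_colorNbrs.mp hy
  rw [mem_union, not_or]
  refine ⟨fun hyU => ?_, fun hyK => ?_⟩
  · obtain ⟨w, hwU, hwy, hyw, hxw⟩ :=
      h.separated y hyU x (h.notMem hx) hxp (Or.inl (h.color x hx)) hxy.symm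
    exact hxw (h.adj_trans_of_color_eq hα hdeg hx hxy hyw hwy.symm
      (ne_of_mem_of_not_mem hwU (h.notMem hx)))
  · exact h.color_ne (hyb.symm.trans (h.color y (mem_of_mem_erase hyK)))

lemma separated_recolor (h : RecoloringWalk G α ξ a b K U p) (hα : ∀ i, 2 ≤ α i)
    (hdeg : ∀ v, G.degree v ≤ ∑ i, α i) {u v : V} (hu : u ∈ U ∪ K.erase x)
    (hv : v ∉ U ∪ K.erase x) (hvx : v ≠ x) (hcolor : ξ v = a ∨ ξ v = b) (huv : G.Adj u v) :
    ∃ w ∈ U ∪ K.erase x, ξ w = ξ u ∧ G.Adj u w ∧ ¬ G.Adj v w := by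
  obtain ⟨hvU, hvK⟩ : v ∉ U ∧ v ∉ K := by simpa [hvx] using hv
  rcases mem_union.mp hu with huU | hu
  · obtain ⟨w, hwU, hw⟩ :=
      h.separated u huU v hvU (ne_of_mem_of_not_mem h.last_mem hvK).symm hcolor huv
    exact ⟨w, mem_union_left _ hwU, hw⟩
  · have huK := mem_of_mem_erase hu
    have hvb : ξ v = b := hcolor.resolve_left fun hva =>
      hvK (h.mem_of_adj (fun i => two_pos.trans_le (hα i)) (hdeg u) huK huv hva)
    obtain ⟨w, hwK, hwx, hwu⟩ := h.exists_ne_ne (hα a) x u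
    exact ⟨w, mem_union_right _ (mem_erase.mpr ⟨hwx, hwK⟩),
      (h.color w hwK).trans (h.color u huK).symm, h.adj huK hwK hwu.symm,
      fun hvw => hwu (h.noCommonNbr v hvb w hwK u huK hvw.symm huv)⟩

lemma recolor (h : RecoloringWalk G α ξ a b K U p) (hα : ∀ i, 2 ≤ α i)
    (hdeg : ∀ v, G.degree v ≤ ∑ i, α i) (hx : x ∈ K) (hxp : x ≠ p) :
    RecoloringWalk G α (update ξ x b) b a (insert x (colorNbrs G ξ x b)) (U ∪ K.erase x) x where
  toOmegaClique := h.toOmegaClique.recolor (fun i => two_pos.trans_le (hα i)) (hdeg x) hx b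
  color_ne := h.color_ne.symm
  noCommonNbr :=
    h.noCommonNbr_recolor (fun i => two_pos.trans_le (hα i)) hdeg h.noCommonNbr h.color_ne hx
  last_mem := mem_insert_self _ _
  disjoint := h.disjoint_recolor (fun i => two_pos.trans_le (hα i)) hdeg hx hxp
  separated u hu v hv hvx hcolor huv := by
    have hxU : x ∉ U ∪ K.erase x := by simp [h.notMem hx]
    rw [update_of_ne hvx, or_comm] at hcolor
    obtain ⟨w, hw, hwu, huw, hvw⟩ := h.separated_recolor hα hdeg hu hv hvx hcolor huv
    refine ⟨w, hw, ?_, huw, hvw⟩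
    rwa [update_of_ne (ne_of_mem_of_not_mem hw hxU), update_of_ne (ne_of_mem_of_not_mem hu hxU)]

lemma ssubset_union_erase (h : RecoloringWalk G α ξ a b K U p) (hxp : x ≠ p) :
    U ⊂ U ∪ K.erase x :=
  (ssubset_iff_of_subset subset_union_left).mpr
    ⟨p, mem_union_right _ (mem_erase.mpr ⟨hxp.symm, h.last_mem⟩), h.notMem h.last_mem⟩

protected lemma false (h : RecoloringWalk G α ξ a b K U p) (hα : ∀ i, 2 ≤ α i)
    (hdeg : ∀ v, G.degree v ≤ ∑ i, α i) : False := by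
  induction U using WellFoundedGT.induction generalizing ξ a b K p with
  | ind U ih =>
    obtain ⟨x, hx, hxp, -⟩ := h.exists_ne_ne (hα a) p p
    exact ih _ (h.ssubset_union_erase hxp) (h.recolor hα hdeg hx hxp)

end RecoloringWalk

namespace OmegaClique

variable {a : Fin k} {K : Finset V} {v x y z : V}

lemma adj_of_adj_of_color_ne (hK : OmegaClique G α ξ a K) (hα : ∀ i, 2 ≤ α i)
    (hdeg : ∀ v, G.degree v ≤ ∑ i, α i) (hy : y ∈ K) (hz : z ∈ K) (hv : ξ v ≠ a)
    (hyv : G.Adj y v) : G.Adj z v := by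
  have hcommon : ¬ NoCommonNbr G ξ (ξ v) K := fun hnone =>
    RecoloringWalk.false (U := ∅) (p := y)
      { hK with
        color_ne := hv
        noCommonNbr := hnone
        last_mem := hy
        disjoint := disjoint_empty_right K
        separated := by simp }
      hα hdeg
  exact hK.adj_of_not_noCommonNbr (fun i => two_pos.trans_le (hα i)) hdeg hcommon hv hy hz rfl hyv

lemma isClique_neighborSet (hK : OmegaClique G α ξ a K) (hα : ∀ i, 2 ≤ α i)
    (hdeg : ∀ v, G.degree v ≤ ∑ i, α i) (hx : x ∈ K) : G.IsClique (G.neighborSet x) := by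
  intro u hxu v hxv huv
  have hpos (i : Fin k) : 0 < α i := two_pos.trans_le (hα i)
  by_cases hcolor : ξ u = ξ v
  · exact hK.adj_of_color_eq hpos (hdeg x) hx hxu hxv hcolor huv
  · refine (hK.recolor hpos (hdeg x) hx (ξ u)).adj_of_adj_of_color_ne hα hdeg (mem_insert_self _ _)
      (mem_insert_of_mem (mem_colorNbrs.mpr ⟨hxu, rfl⟩)) ?_ hxv
    rw [update_of_ne hxv.ne']
    exact Ne.symm hcolor

lemma isNClique_insert_neighborFinset (hK : OmegaClique G α ξ a K) (hα : ∀ i, 2 ≤ α i)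
    (hdeg : ∀ v, G.degree v ≤ ∑ i, α i) (hx : x ∈ K) :
    G.IsNClique (∑ i, α i + 1) (insert x (G.neighborFinset x)) := by
  have hdegree : G.degree x = ∑ i, α i := by
    rw [← sum_card_colorNbrs (ξ := ξ)]
    exact sum_congr rfl fun i _ =>
      hK.card_colorNbrs (fun i => two_pos.trans_le (hα i)) (hdeg x) hx i
  have hclique : G.IsNClique (∑ i, α i) (G.neighborFinset x) :=
    ⟨by simpa using hK.isClique_neighborSet hα hdeg hx, hdegree⟩
  exact hclique.insert fun v hv => (G.mem_neighborFinset x v).mp hv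

end OmegaClique

lemma not_isLargeClique_of_mem_Omega (hα : ∀ i, 2 ≤ α i) (hdeg : ∀ v, G.degree v ≤ ∑ i, α i)
    (hfree : G.CliqueFree (∑ i, α i + 1)) (hξ : ξ ∈ Omega G α) (s : Finset V) :
    ¬ IsLargeClique G α ξ s := by
  rintro ⟨a, hclique, hcolor⟩
  have hK : OmegaClique G α ξ a s := ⟨hξ, hclique, hcolor⟩
  obtain ⟨x, hx⟩ : s.Nonempty := card_pos.mp (hclique.card_eq ▸ Nat.succ_pos (α a))
  exact hfree _ (hK.isNClique_insert_neighborFinset hα hdeg hx)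

end LargeCliques

/-- **Proposition 5 / Theorem 2.** No coloring in `Ω` has a large clique:
there is a `Φ`-minimizing coloring with no large clique, and every `Φ`-minimizing coloring
which (among `Φ`-minimizers) has the fewest large cliques has zero large cliques. -/
theorem omega_colorings_have_no_large_cliques {V : Type*} [Fintype V] [DecidableEq V]
    (G : SimpleGraph V) [DecidableRel G.Adj] (D c : ℕ)
    (α : Fin (c + 1) → ℕ) (hα : ∀ i, 2 ≤ α i) (hsum : ∑ i, α i = D)
    (hdeg : ∀ v : V, G.degree v ≤ D) (hfree : G.CliqueFree (D + 1)) :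
    (∃ ξ : V → Fin (c + 1),
      (∀ ψ : V → Fin (c + 1), Phi G α ξ ≤ Phi G α ψ) ∧
      ∀ s : Finset V, ¬ IsLargeClique G α ξ s) ∧
    (∀ ξ : V → Fin (c + 1),
      (∀ ψ : V → Fin (c + 1), Phi G α ξ ≤ Phi G α ψ) →
      (∀ ψ : V → Fin (c + 1), (∀ χ : V → Fin (c + 1), Phi G α ψ ≤ Phi G α χ) →
        numLargeCliques G α ξ ≤ numLargeCliques G α ψ) →
      numLargeCliques G α ξ = 0) := by
  subst hsum
  have hnone {ξ : V → Fin (c + 1)} (hξ : ξ ∈ Omega G α) (s : Finset V) :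
      ¬ IsLargeClique G α ξ s :=
    not_isLargeClique_of_mem_Omega hα hdeg hfree hξ s
  refine ⟨?_, fun ξ hPhi hnum => ?_⟩
  · obtain ⟨ξ, hξ⟩ := Omega_nonempty G α
    exact ⟨ξ, hξ.1, hnone hξ⟩
  · rw [numLargeCliques, Set.ncard_eq_zero]
    exact Set.eq_empty_of_forall_notMem (hnone ⟨hPhi, hnum⟩)
end
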